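/- arXiv:2103.00253 — 2 statements merged into one kernel-verified Lean document; each statement's English description precedes it below -/
import Mathlib

section
/- Let R be a commutative Noetherian local ring and let M be a nonzero finitely generated R-module with finite injective dimension. If the reducing Gorenstein dimension of M is at most 1, then R is Gorenstein. -/
open CategoryTheory Pointwise

universe u

variable (R : Type u) [CommRing R]

/-- `Ext^n_R(X, Y) = 0`. -/
def ExtVanish (X Y : Type u) [AddCommGroup X] [Module R X]
    [AddCommGroup Y] [Module R Y] (n : ℕ) : Prop :=
  Subsingleton (((Ext R (ModuleCat.{u} R) n).obj
    (Opposite.op (ModuleCat.of R X))).obj (ModuleCat.of R Y))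

/-- A finitely generated module `X` is totally reflexive if the evaluation map to the
double dual is bijective and `Ext^i(X, R) = 0 = Ext^i(X^*, R)` for all `i ≥ 1`. -/
def IsTotallyReflexive (X : Type u) [AddCommGroup X] [Module R X] : Prop :=
  Module.Finite R X ∧
  Function.Bijective (Module.Dual.eval R X) ∧
  (∀ i : ℕ, 1 ≤ i → ExtVanish R X R i) ∧
  (∀ i : ℕ, 1 ≤ i → ExtVanish R (Module.Dual R X) R i)

/-- `0 → A → B → C → 0` is a short exact sequence. -/
def IsShortExact {A B C : Type u} [AddCommGroup A] [Module R A] [AddCommGroup B] [Module R B]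
    [AddCommGroup C] [Module R C] (f : A →ₗ[R] B) (g : B →ₗ[R] C) : Prop :=
  Function.Injective f ∧ Function.Surjective g ∧ Function.Exact f g

/-- Gorenstein dimension at most `n`: there is a resolution of length `≤ n`
by totally reflexive modules. -/
def GdimLE : ℕ → ModuleCat.{u} R → Prop
  | 0, M => IsTotallyReflexive R M
  | n + 1, M => ∃ (X K : ModuleCat.{u} R) (f : K →ₗ[R] X) (g : X →ₗ[R] M),
      IsTotallyReflexive R X ∧ IsShortExact R f g ∧ GdimLE n K

/-- Projective dimension at most `n`. -/
def PdimLE : ℕ → ModuleCat.{u} R → Prop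
  | 0, M => Module.Finite R M ∧ Module.Projective R M
  | n + 1, M => ∃ (X K : ModuleCat.{u} R) (f : K →ₗ[R] X) (g : X →ₗ[R] M),
      Module.Finite R X ∧ Module.Projective R X ∧ IsShortExact R f g ∧ PdimLE n K

/-- Injective dimension at most `n`. -/
def InjdimLE : ℕ → ModuleCat.{u} R → Prop
  | 0, M => Module.Injective R M
  | n + 1, M => ∃ (I C : ModuleCat.{u} R) (f : M →ₗ[R] I) (g : I →ₗ[R] C),
      Module.Injective R I ∧ IsShortExact R f g ∧ InjdimLE n C

/-- The Gorenstein dimension, as an element of `ℕ∞`. -/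
noncomputable def Gdim (M : ModuleCat.{u} R) : ℕ∞ :=
  sInf {n : ℕ∞ | ∃ m : ℕ, n = (m : ℕ∞) ∧ GdimLE R m M}

/-- The projective dimension, as an element of `ℕ∞`. -/
noncomputable def Pdim (M : ModuleCat.{u} R) : ℕ∞ :=
  sInf {n : ℕ∞ | ∃ m : ℕ, n = (m : ℕ∞) ∧ PdimLE R m M}

/-- A local ring is Gorenstein if it has finite injective dimension over itself. -/
def IsGorensteinRing : Prop :=
  ∃ n : ℕ, InjdimLE R n (ModuleCat.of R R)

/-- `IsSyzygy R n S K` : `S` is an `n`-th syzygy of `K`, i.e. there is an exact sequence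
`0 → S → F_{n-1} → ⋯ → F_0 → K → 0` with each `F_j` finitely generated free. -/
def IsSyzygy : ℕ → ModuleCat.{u} R → ModuleCat.{u} R → Prop
  | 0, S, K => Nonempty (S ≃ₗ[R] K)
  | n + 1, S, K => ∃ (W F : ModuleCat.{u} R) (f : W →ₗ[R] F) (g : F →ₗ[R] K),
      Module.Free R F ∧ Module.Finite R F ∧ IsShortExact R f g ∧ IsSyzygy n S W

/-- One step in a reducing sequence: a short exact sequence
`0 → K^{⊕a} → L → (Ω^n K)^{⊕b} → 0`. -/
def ReducingStep (K L : ModuleCat.{u} R) (a b n : ℕ) : Prop :=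
  ∃ (W : ModuleCat.{u} R) (f : (Fin a → K) →ₗ[R] L) (g : L →ₗ[R] (Fin b → W)),
    IsSyzygy R n W K ∧ IsShortExact R f g

/-- `M` admits a reducing sequence `K_0 = M, K_1, …, K_r` relative to the property `P`,
that is, short exact sequences `0 → K_{i-1}^{⊕a_i} → K_i → (Ω^{n_i}K_{i-1})^{⊕b_i} → 0`
with `a_i, b_i, n_i ≥ 1` and `P (K_r)`. -/
def HasReducingSeq (P : ModuleCat.{u} R → Prop) (M : ModuleCat.{u} R) (r : ℕ) : Prop :=
  ∃ (K : Fin (r + 1) → ModuleCat.{u} R) (a b n : Fin r → ℕ),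
    K 0 = M ∧ (∀ i, Module.Finite R (K i)) ∧
    (∀ i : Fin r, 1 ≤ a i ∧ 1 ≤ b i ∧ 1 ≤ n i ∧
      ReducingStep R (K i.castSucc) (K i.succ) (a i) (b i) (n i)) ∧
    P (K (Fin.last r))

/-- The reducing invariant attached to the finiteness property `P`. -/
noncomputable def ReducingDim (P : ModuleCat.{u} R → Prop) (M : ModuleCat.{u} R) : ℕ∞ :=
  sInf {n : ℕ∞ | ∃ r : ℕ, n = (r : ℕ∞) ∧ HasReducingSeq R P M r}

/-- The reducing Gorenstein dimension. -/
noncomputable def rGdim (M : ModuleCat.{u} R) : ℕ∞ :=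
  ReducingDim R (fun N => ∃ m : ℕ, GdimLE R m N) M

/-- The reducing projective dimension. -/
noncomputable def rPdim (M : ModuleCat.{u} R) : ℕ∞ :=
  ReducingDim R (fun N => ∃ m : ℕ, PdimLE R m N) M

/-- depth of a module over a local ring: `inf { i | Ext^i(k, M) ≠ 0 }`. -/
noncomputable def depth [IsLocalRing R] (M : ModuleCat.{u} R) : ℕ∞ :=
  sInf {n : ℕ∞ | ∃ i : ℕ, n = (i : ℕ∞) ∧
    ¬ ExtVanish R (R ⧸ IsLocalRing.maximalIdeal R) M i}

/-- maximal Cohen-Macaulay: depth equals the Krull dimension of the ring. -/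
def IsMCM [IsLocalRing R] (M : ModuleCat.{u} R) : Prop :=
  (depth R M : WithBot ℕ∞) = ringKrullDim R

/-- torsion-free: every non zero-divisor of `R` is a non zero-divisor on `M`. -/
def IsTorsionFreeModule (M : Type u) [AddCommGroup M] [Module R M] : Prop :=
  ∀ r ∈ nonZeroDivisors R, ∀ m : M, r • m = 0 → m = 0

/-!
There are two steps: `M` has finite projective dimension, and a ring with a nonzero finitely
generated module of finite projective and finite injective dimension is Gorenstein (Foxby).

*Finite projective dimension.* Since `M` has finite injective dimension, `Ext^i(A, Y) = 0` for
`i ≥ 1` whenever `A` is totally reflexive and `Y` is `M`, a syzygy of `M`, or the middle term `L`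
of the reducing sequence `0 → M^a → L → (Ω^n M)^b → 0`. If such a `Y` has finite Gorenstein
dimension, the class of the exact sequence defining a high syzygy of `Y` lies in a vanishing `Ext`
group, so that syzygy is projective. Hence `L` has finite projective dimension, and the connecting
maps `Ext^i(M^a, Y) → Ext^{i+1}((Ω^n M)^b, Y)` are injective for large `i` and all `Y`. Followed by
the product with the class of `Ω^n M`, which is injective in positive degrees, they are given by
products with classes in `Ext^{n+1}(M, M)`. So an element of `Ext^i(M, Y)` killed by all these
classes is zero; but long products of them vanish, as `M` has finite injective dimension.

*Foxby's theorem.* Let `0 → K → R^m → M → 0` be a minimal cover. The coordinates `K → R` of the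
inclusion take values in the maximal ideal, and `K` has finite projective dimension. Iterated
mapping cones turn an injective coresolution of `R` into one for `K`, up to an injective module,
on which a functional `K → R` lifts to multiplications by some of its values. A lift of a functional
with values in the maximal ideal is thus zero on socles, so it induces zero on `Ext^n(k, -)`.
Therefore `Ext^n(k, R)^m → Ext^n(k, M)` is injective, and the target vanishes for large `n`.
Noetherian induction passes from the residue field to all `R ⧸ I`, and Baer's criterion bounds the
injective dimension of `R`.
-/

universe w

section ExtVanishing

variable {C : Type*} [Category* C] [Abelian C] [HasExt.{w} C] {S : ShortComplex C} {X : C} {n : ℕ}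

lemma subsingleton_ext_X₁_left (hS : S.ShortExact) (h₂ : Subsingleton (Abelian.Ext S.X₂ X n))
    (h₃ : Subsingleton (Abelian.Ext S.X₃ X (n + 1))) : Subsingleton (Abelian.Ext S.X₁ X n) :=
  subsingleton_of_forall_eq 0 fun x ↦ by
    obtain ⟨y, rfl⟩ := Abelian.Ext.contravariant_sequence_exact₁ hS X x (Nat.add_comm 1 n)
      (Subsingleton.elim _ _)
    rw [Subsingleton.elim y 0, Abelian.Ext.comp_zero]

lemma subsingleton_ext_X₂_left (hS : S.ShortExact) (h₁ : Subsingleton (Abelian.Ext S.X₁ X n))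
    (h₃ : Subsingleton (Abelian.Ext S.X₃ X n)) : Subsingleton (Abelian.Ext S.X₂ X n) :=
  subsingleton_of_forall_eq 0 fun x ↦ by
    obtain ⟨y, rfl⟩ := Abelian.Ext.contravariant_sequence_exact₂ hS X x (Subsingleton.elim _ _)
    rw [Subsingleton.elim y 0, Abelian.Ext.comp_zero]

lemma subsingleton_ext_X₃_left (hS : S.ShortExact) (h₁ : Subsingleton (Abelian.Ext S.X₁ X n))
    (h₂ : Subsingleton (Abelian.Ext S.X₂ X (n + 1))) :
    Subsingleton (Abelian.Ext S.X₃ X (n + 1)) :=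
  subsingleton_of_forall_eq 0 fun x ↦ by
    obtain ⟨y, rfl⟩ := Abelian.Ext.contravariant_sequence_exact₃ hS X x (Subsingleton.elim _ _)
      (Nat.add_comm 1 n)
    rw [Subsingleton.elim y 0, Abelian.Ext.comp_zero]

lemma subsingleton_ext_X₁_right (hS : S.ShortExact)
    (h₂ : Subsingleton (Abelian.Ext X S.X₂ (n + 1))) (h₃ : Subsingleton (Abelian.Ext X S.X₃ n)) :
    Subsingleton (Abelian.Ext X S.X₁ (n + 1)) :=
  subsingleton_of_forall_eq 0 fun x ↦ by
    obtain ⟨y, rfl⟩ := Abelian.Ext.covariant_sequence_exact₁ X hS x (Subsingleton.elim _ _) rfl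
    rw [Subsingleton.elim y 0, Abelian.Ext.zero_comp]

lemma subsingleton_ext_X₂_right (hS : S.ShortExact) (h₁ : Subsingleton (Abelian.Ext X S.X₁ n))
    (h₃ : Subsingleton (Abelian.Ext X S.X₃ n)) : Subsingleton (Abelian.Ext X S.X₂ n) :=
  subsingleton_of_forall_eq 0 fun x ↦ by
    obtain ⟨y, rfl⟩ := Abelian.Ext.covariant_sequence_exact₂ X hS x (Subsingleton.elim _ _)
    rw [Subsingleton.elim y 0, Abelian.Ext.zero_comp]

lemma subsingleton_ext_X₃_right (hS : S.ShortExact) (h₁ : Subsingleton (Abelian.Ext X S.X₁ (n + 1)))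
    (h₂ : Subsingleton (Abelian.Ext X S.X₂ n)) : Subsingleton (Abelian.Ext X S.X₃ n) :=
  subsingleton_of_forall_eq 0 fun x ↦ by
    obtain ⟨y, rfl⟩ := Abelian.Ext.covariant_sequence_exact₃ X hS x rfl (Subsingleton.elim _ _)
    rw [Subsingleton.elim y 0, Abelian.Ext.zero_comp]

lemma subsingleton_ext_of_projective {P : C} [Projective P] :
    Subsingleton (Abelian.Ext P X (n + 1)) :=
  subsingleton_of_forall_eq 0 Abelian.Ext.eq_zero_of_projective

lemma subsingleton_ext_left_of_retract {X' : C} (r : Retract X' X) {Y : C}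
    (h : Subsingleton (Abelian.Ext X Y n)) : Subsingleton (Abelian.Ext X' Y n) :=
  subsingleton_of_forall_eq 0 fun x ↦ by
    rw [← Abelian.Ext.mk₀_id_comp x, ← r.retract, ← Abelian.Ext.mk₀_comp_mk₀_assoc,
      Subsingleton.elim ((Abelian.Ext.mk₀ r.r).comp x (zero_add n)) 0, Abelian.Ext.comp_zero]

lemma subsingleton_ext_right_of_retract {X' : C} (r : Retract X' X) {Y : C}
    (h : Subsingleton (Abelian.Ext Y X n)) : Subsingleton (Abelian.Ext Y X' n) :=
  subsingleton_of_forall_eq 0 fun x ↦ by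
    rw [← Abelian.Ext.comp_mk₀_id x, ← r.retract, ← Abelian.Ext.mk₀_comp_mk₀,
      ← Abelian.Ext.comp_assoc_of_third_deg_zero,
      Subsingleton.elim (x.comp (Abelian.Ext.mk₀ r.i) (add_zero n)) 0, Abelian.Ext.zero_comp]

end ExtVanishing

section ModuleExt

variable {R : Type u} [CommRing R] {A B C : Type u} [AddCommGroup A] [Module R A]
  [AddCommGroup B] [Module R B] [AddCommGroup C] [Module R C] {f : A →ₗ[R] B} {g : B →ₗ[R] C}

/-- A short exact sequence of modules, as a short complex in the category of modules. -/
abbrev IsShortExact.shortComplex (h : IsShortExact R f g) : ShortComplex (ModuleCat.{u} R) :=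
  ModuleCat.shortComplexOfCompEqZero f g h.2.2.linearMap_comp_eq_zero

lemma IsShortExact.shortExact (h : IsShortExact R f g) : h.shortComplex.ShortExact :=
  ModuleCat.shortComplex_shortExact _ h.2.2 h.1 h.2.1

lemma isShortExact_ker_subtype (hg : Function.Surjective g) :
    IsShortExact R (LinearMap.ker g).subtype g :=
  ⟨Subtype.val_injective, hg, LinearMap.exact_subtype_ker_map g⟩

variable {X Y : Type u} [AddCommGroup X] [Module R X] [AddCommGroup Y] [Module R Y]

-- `ExtVanish` is phrased with the derived functors of `Hom`, whereas the Yoneda product lives on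
-- `Abelian.Ext`; a projective resolution computes both.
lemma extVanish_succ_iff {n : ℕ} :
    ExtVanish R X Y (n + 1) ↔
      Subsingleton (Abelian.Ext (ModuleCat.of R X) (ModuleCat.of R Y) (n + 1)) := by
  let P := projectiveResolution (ModuleCat.of R X)
  have exact_iff : ExtVanish R X Y (n + 1) ↔
      Function.Exact ((P.complex.linearYonedaObj R (ModuleCat.of R Y)).d n (n + 1))
        ((P.complex.linearYonedaObj R (ModuleCat.of R Y)).d (n + 1) (n + 2)) := by
    rw [ExtVanish, ← ModuleCat.isZero_iff_subsingleton,
      (P.isoExt (R := R) (n + 1) (ModuleCat.of R Y)).isZero_iff,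
      ← HomologicalComplex.exactAt_iff_isZero_homology,
      HomologicalComplex.exactAt_iff' _ n (n + 1) (n + 2) (by simp) (by simp),
      ShortComplex.ShortExact.moduleCat_exact_iff_function_exact]
    rfl
  rw [exact_iff]
  constructor
  · refine fun h ↦ subsingleton_of_forall_eq 0 fun x ↦ ?_
    obtain ⟨f, hf, rfl⟩ := P.extMk_surjective x (n + 2) rfl
    exact (P.extMk_eq_zero_iff f (n + 2) rfl hf n rfl).2 ((h f).1 hf)
  · refine fun _ f ↦ ⟨fun hf ↦ ?_, ?_⟩
    · exact (P.extMk_eq_zero_iff f (n + 2) rfl hf n rfl).1 (Subsingleton.elim _ _)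
    · rintro ⟨g, rfl⟩
      exact (P.complex.d_comp_d_assoc (n + 2) (n + 1) n g).trans Limits.zero_comp

lemma IsShortExact.exists_comp_eq_of_subsingleton_ext (h : IsShortExact R f g)
    (hC : Subsingleton (Abelian.Ext (ModuleCat.of R C) (ModuleCat.of R Y) 1)) (φ : A →ₗ[R] Y) :
    ∃ ψ : B →ₗ[R] Y, ψ ∘ₗ f = φ := by
  obtain ⟨y, hy⟩ := Abelian.Ext.contravariant_sequence_exact₁ h.shortExact (ModuleCat.of R Y)
    (Abelian.Ext.mk₀ (ModuleCat.ofHom φ)) (n₁ := 1) rfl (Subsingleton.elim _ _)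
  obtain ⟨ψ, rfl⟩ := (Abelian.Ext.mk₀_bijective _ _).2 y
  rw [Abelian.Ext.mk₀_comp_mk₀] at hy
  exact ⟨ψ.hom, congrArg ModuleCat.Hom.hom ((Abelian.Ext.mk₀_bijective _ _).1 hy)⟩

lemma IsShortExact.subsingleton_ext_one_of_exists_comp_eq (h : IsShortExact R f g)
    (hB : Subsingleton (Abelian.Ext (ModuleCat.of R B) (ModuleCat.of R Y) 1))
    (hf : ∀ φ : A →ₗ[R] Y, ∃ ψ : B →ₗ[R] Y, ψ ∘ₗ f = φ) :
    Subsingleton (Abelian.Ext (ModuleCat.of R C) (ModuleCat.of R Y) 1) :=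
  subsingleton_of_forall_eq 0 fun x ↦ by
    obtain ⟨y, rfl⟩ := Abelian.Ext.contravariant_sequence_exact₃ h.shortExact (ModuleCat.of R Y) x
      (Subsingleton.elim _ _) (n₀ := 0) rfl
    obtain ⟨φ, rfl⟩ := (Abelian.Ext.mk₀_bijective _ _).2 y
    obtain ⟨ψ, hψ⟩ := hf φ.hom
    have hφ : φ = h.shortComplex.f ≫ ModuleCat.ofHom ψ := ModuleCat.hom_ext hψ.symm
    rw [hφ, ← Abelian.Ext.mk₀_comp_mk₀, ShortComplex.ShortExact.extClass_comp_assoc]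

end ModuleExt

section TotallyReflexive

variable {R : Type u} [CommRing R] {A B C : Type u} [AddCommGroup A] [Module R A]
  [AddCommGroup B] [Module R B] [AddCommGroup C] [Module R C] {f : A →ₗ[R] B} {g : B →ₗ[R] C}

lemma isTotallyReflexive_iff :
    IsTotallyReflexive R A ↔ Module.Finite R A ∧ Module.IsReflexive R A ∧
      (∀ i, Subsingleton (Abelian.Ext (ModuleCat.of R A) (ModuleCat.of R R) (i + 1))) ∧
      ∀ i, Subsingleton
        (Abelian.Ext (ModuleCat.of R (Module.Dual R A)) (ModuleCat.of R R) (i + 1)) := by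
  have ext_iff (X : Type u) [AddCommGroup X] [Module R X] :
      (∀ i, 1 ≤ i → ExtVanish R X R i) ↔
        ∀ i, Subsingleton (Abelian.Ext (ModuleCat.of R X) (ModuleCat.of R R) (i + 1)) := by
    simp only [← extVanish_succ_iff]
    exact ⟨fun h i ↦ h (i + 1) i.succ_pos, fun h i hi ↦ Nat.sub_add_cancel hi ▸ h (i - 1)⟩
  rw [IsTotallyReflexive, ext_iff, ext_iff]
  exact and_congr_right' (and_congr_left' ⟨fun h ↦ ⟨h⟩, fun h ↦ h.1⟩)

lemma IsShortExact.dual (h : IsShortExact R f g)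
    (hC : Subsingleton (Abelian.Ext (ModuleCat.of R C) (ModuleCat.of R R) 1)) :
    IsShortExact R g.dualMap f.dualMap :=
  ⟨LinearMap.dualMap_injective_of_surjective h.2.1,
    fun φ ↦ h.exists_comp_eq_of_subsingleton_ext hC φ,
    LinearMap.exact_lcomp_of_exact_of_surjective R h.2.2 h.2.1⟩

lemma IsShortExact.isReflexive_left [Module.IsReflexive R B] [Module.IsReflexive R C]
    (h : IsShortExact R f g)
    (hC : Subsingleton (Abelian.Ext (ModuleCat.of R C) (ModuleCat.of R R) 1)) :
    Module.IsReflexive R A := by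
  have hdual := h.dual hC
  refine ⟨LinearMap.bijective_of_bijective_of_injective_of_left_exact f g f.dualMap.dualMap
    g.dualMap.dualMap (Module.Dual.eval R A) (Module.Dual.eval R B) (Module.Dual.eval R C) rfl rfl
    h.2.2 ?_ (Module.bijective_dual_eval R B) (Module.bijective_dual_eval R C).1 h.1 ?_⟩
  · exact LinearMap.exact_lcomp_of_exact_of_surjective R hdual.2.2 hdual.2.1
  · exact LinearMap.dualMap_injective_of_surjective hdual.2.1

variable [IsNoetherianRing R]

lemma IsTotallyReflexive.dual (hA : IsTotallyReflexive R A) :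
    IsTotallyReflexive R (Module.Dual R A) := by
  obtain ⟨_, _, hA, hA'⟩ := isTotallyReflexive_iff.1 hA
  refine isTotallyReflexive_iff.2 ⟨inferInstance, inferInstance, hA', fun i ↦ ?_⟩
  exact subsingleton_ext_left_of_retract
    (Retract.ofIso (Module.evalEquiv R A).symm.toModuleIso) (hA i)

lemma IsTotallyReflexive.of_isShortExact [Module.Finite R B] [Module.Projective R B]
    (h : IsShortExact R f g) (hC : IsTotallyReflexive R C) : IsTotallyReflexive R A := by
  obtain ⟨_, _, hC, hC'⟩ := isTotallyReflexive_iff.1 hC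
  have proj : Projective (ModuleCat.of R B) := (IsProjective.iff_projective B).1 inferInstance
  have proj' : Projective (ModuleCat.of R (Module.Dual R B)) :=
    (IsProjective.iff_projective (Module.Dual R B)).1 inferInstance
  have hdual := h.dual (hC 0)
  refine isTotallyReflexive_iff.2
    ⟨Module.Finite.of_injective f h.1, h.isReflexive_left (hC 0), fun i ↦ ?_, fun i ↦ ?_⟩
  · exact subsingleton_ext_X₁_left h.shortExact subsingleton_ext_of_projective (hC (i + 1))
  · cases i with
    | zero =>
      refine hdual.subsingleton_ext_one_of_exists_comp_eq subsingleton_ext_of_projective fun φ ↦ ?_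
      obtain ⟨c, rfl⟩ := (Module.bijective_dual_eval R C).2 φ
      obtain ⟨b, rfl⟩ := h.2.1 c
      exact ⟨Module.Dual.eval R B b, rfl⟩
    | succ i =>
      exact subsingleton_ext_X₃_left hdual.shortExact (hC' i) subsingleton_ext_of_projective

lemma IsTotallyReflexive.exists_isShortExact_free (hA : IsTotallyReflexive R A) :
    ∃ (F Q : Type u) (_ : AddCommGroup F) (_ : Module R F) (_ : AddCommGroup Q) (_ : Module R Q)
      (f : A →ₗ[R] F) (g : F →ₗ[R] Q), Module.Free R F ∧ Module.Finite R F ∧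
      IsShortExact R f g ∧ IsTotallyReflexive R Q := by
  have hAdual := hA.dual
  have := hAdual.1
  obtain ⟨n, p, hp⟩ := Module.Finite.exists_fin' R (Module.Dual R A)
  have hker := isShortExact_ker_subtype hp
  have hQ := (IsTotallyReflexive.of_isShortExact hker hAdual).dual
  have hdual := hker.dual (((isTotallyReflexive_iff.1 hAdual).2.2.1) 0)
  exact ⟨_, _, _, _, _, _, p.dualMap ∘ₗ Module.Dual.eval R A, _, inferInstance, inferInstance,
    ⟨hdual.1.comp hA.2.1.1, hdual.2.1, (hA.2.1.2.comp_exact_iff_exact).2 hdual.2.2⟩, hQ⟩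

end TotallyReflexive

section FinitePower

variable {R : Type u} [CommRing R] {X Y : ModuleCat.{u} R} {b n : ℕ}

lemma sum_proj_comp_single :
    ∑ l : Fin b, (ModuleCat.ofHom (LinearMap.proj l) : ModuleCat.of R (Fin b → Y) ⟶ Y) ≫
      ModuleCat.ofHom (LinearMap.single R (fun _ ↦ Y) l) = 𝟙 (ModuleCat.of R (Fin b → Y)) := by
  ext x
  simp [ModuleCat.hom_sum]

lemma subsingleton_ext_right_pi (h : Subsingleton (Abelian.Ext X Y n)) :
    Subsingleton (Abelian.Ext X (ModuleCat.of R (Fin b → Y)) n) :=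
  subsingleton_of_forall_eq 0 fun x ↦ by
    rw [← Abelian.Ext.comp_mk₀_id x, ← sum_proj_comp_single, Abelian.Ext.mk₀_sum,
      Abelian.Ext.comp_sum]
    refine Finset.sum_eq_zero fun l _ ↦ ?_
    rw [← Abelian.Ext.mk₀_comp_mk₀, ← Abelian.Ext.comp_assoc_of_third_deg_zero,
      Subsingleton.elim (x.comp _ _) 0, Abelian.Ext.zero_comp]

lemma ext_pi_left_eq_zero {x : Abelian.Ext (ModuleCat.of R (Fin b → X)) Y n}
    (h : ∀ l : Fin b, (Abelian.Ext.mk₀ (ModuleCat.ofHom (LinearMap.single R (fun _ ↦ X) l) :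
      X ⟶ ModuleCat.of R (Fin b → X))).comp x (zero_add n) = 0) : x = 0 := by
  rw [← Abelian.Ext.mk₀_id_comp x, ← sum_proj_comp_single, Abelian.Ext.mk₀_sum,
    Abelian.Ext.sum_comp]
  refine Finset.sum_eq_zero fun l _ ↦ ?_
  rw [← Abelian.Ext.mk₀_comp_mk₀_assoc, h l, Abelian.Ext.comp_zero]

/-- `X` as the `l`-th direct summand of `X^a`. -/
def retractPi (X : ModuleCat.{u} R) {a : ℕ} (l : Fin a) :
    Retract X (ModuleCat.of R (Fin a → X)) where
  i := ModuleCat.ofHom (LinearMap.single R (fun _ ↦ X) l)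
  r := ModuleCat.ofHom (LinearMap.proj l)
  retract := by ext x; simp

end FinitePower

section Orthogonal

variable {R : Type u} [CommRing R]

/-- The right orthogonal of the totally reflexive modules: the modules `Y` with
`Ext^i(A, Y) = 0` for every totally reflexive `A` and `i ≥ 1`. Modules of finite injective
dimension and all their syzygies lie in it. -/
def IsTotallyReflexiveOrthogonal (Y : ModuleCat.{u} R) : Prop :=
  ∀ (A : Type u) [AddCommGroup A] [Module R A], IsTotallyReflexive R A →
    ∀ i, Subsingleton (Abelian.Ext (ModuleCat.of R A) Y (i + 1))

namespace IsTotallyReflexiveOrthogonal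

variable {Y Z : ModuleCat.{u} R} {A B C : ModuleCat.{u} R} {f : A →ₗ[R] B} {g : B →ₗ[R] C}

lemma pi (hY : IsTotallyReflexiveOrthogonal Y) (b : ℕ) :
    IsTotallyReflexiveOrthogonal (ModuleCat.of R (Fin b → Y)) :=
  fun A _ _ hA i ↦ subsingleton_ext_right_pi (hY A hA i)

lemma of_linearEquiv (hY : IsTotallyReflexiveOrthogonal Y) (e : Y ≃ₗ[R] Z) :
    IsTotallyReflexiveOrthogonal Z :=
  fun A _ _ hA i ↦ subsingleton_ext_right_of_retract (Retract.ofIso e.symm.toModuleIso) (hY A hA i)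

lemma of_free [Module.Free R Y] [Module.Finite R Y] : IsTotallyReflexiveOrthogonal Y := by
  have hR : IsTotallyReflexiveOrthogonal (ModuleCat.of R R) :=
    fun A _ _ hA ↦ (isTotallyReflexive_iff.1 hA).2.2.1
  let b := (Module.Free.chooseBasis R Y).reindex (Fintype.equivFin _)
  exact (hR.pi _).of_linearEquiv b.equivFun.symm

lemma of_isShortExact_mid (h : IsShortExact R f g) (hA : IsTotallyReflexiveOrthogonal A)
    (hC : IsTotallyReflexiveOrthogonal C) : IsTotallyReflexiveOrthogonal B :=
  fun X _ _ hX i ↦ subsingleton_ext_X₂_right h.shortExact (hA X hX i) (hC X hX i)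

lemma subsingleton_ext_of_gdimLE (hY : IsTotallyReflexiveOrthogonal Y) {n : ℕ}
    {K : ModuleCat.{u} R} (hK : GdimLE R n K) {i : ℕ} (hi : n ≤ i) :
    Subsingleton (Abelian.Ext K Y (i + 1)) := by
  induction n generalizing K i with
  | zero => exact hY K hK i
  | succ n ih =>
    obtain ⟨X, K', f, g, hX, hses, hK'⟩ := hK
    obtain ⟨i, rfl⟩ := Nat.exists_eq_add_of_le' hi
    exact subsingleton_ext_X₃_left hses.shortExact (ih hK' (Nat.le_add_left n i)) (hY X hX _)

variable [IsNoetherianRing R]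

lemma of_hasInjectiveDimensionLT {d : ℕ} (hY : HasInjectiveDimensionLT Y d) :
    IsTotallyReflexiveOrthogonal Y := by
  suffices key : ∀ (s : ℕ) (A : Type u) [AddCommGroup A] [Module R A], IsTotallyReflexive R A →
      ∀ i, d ≤ i + 1 + s → Subsingleton (Abelian.Ext (ModuleCat.of R A) Y (i + 1)) from
    fun A _ _ hA i ↦ key d A hA i (Nat.le_add_left d _)
  intro s
  induction s with
  | zero => exact fun A _ _ _ i hi ↦ HasInjectiveDimensionLT.subsingleton Y d (i + 1) hi _
  | succ s ih =>
    intro A _ _ hA i hi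
    obtain ⟨F, Q, _, _, _, _, f, g, _, _, hses, hQ⟩ := hA.exists_isShortExact_free
    have : Projective (ModuleCat.of R F) := (IsProjective.iff_projective F).1 inferInstance
    exact subsingleton_ext_X₁_left hses.shortExact subsingleton_ext_of_projective
      (ih Q hQ (i + 1) (by lia))

lemma of_isShortExact_left (h : IsShortExact R f g) (hB : IsTotallyReflexiveOrthogonal B)
    (hC : IsTotallyReflexiveOrthogonal C) : IsTotallyReflexiveOrthogonal A := by
  intro X _ _ hX i
  obtain ⟨F, Q, _, _, _, _, f', g', _, _, hses, hQ⟩ := hX.exists_isShortExact_free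
  have : Projective (ModuleCat.of R F) := (IsProjective.iff_projective F).1 inferInstance
  exact subsingleton_ext_X₁_left hses.shortExact subsingleton_ext_of_projective
    (subsingleton_ext_X₁_right h.shortExact (hB Q hQ _) (hC Q hQ _))

lemma of_isSyzygy {n : ℕ} (hY : IsTotallyReflexiveOrthogonal Y) (h : IsSyzygy R n Z Y) :
    IsTotallyReflexiveOrthogonal Z := by
  induction n generalizing Y with
  | zero => exact h.elim fun e ↦ hY.of_linearEquiv e.symm
  | succ n ih =>
    obtain ⟨W, F, f, g, _, _, hses, hW⟩ := h
    exact ih (of_isShortExact_left hses of_free hY) hW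

end IsTotallyReflexiveOrthogonal

end Orthogonal

section ReducingStep

variable {C : Type*} [Category* C] [Abelian C] [HasExt.{w} C]

/-- The extension class `ξ` can be cancelled on the left of Yoneda products with classes of
positive degree. The class of the projective resolution defining a syzygy has this property. -/
def IsExtLeftCancellable {M W : C} {n : ℕ} (ξ : Abelian.Ext M W n) : Prop :=
  ∀ ⦃Y : C⦄ ⦃j k : ℕ⦄ (z : Abelian.Ext W Y (j + 1)) (h : n + (j + 1) = k),
    ξ.comp z h = 0 → z = 0

lemma isExtLeftCancellable_mk₀ {M W : C} (e : M ≅ W) :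
    IsExtLeftCancellable (Abelian.Ext.mk₀ e.hom) := by
  intro Y j k z h hz
  obtain rfl : j + 1 = k := by lia
  rw [← Abelian.Ext.mk₀_id_comp z, ← e.inv_hom_id, ← Abelian.Ext.mk₀_comp_mk₀_assoc, hz,
    Abelian.Ext.comp_zero]

lemma IsExtLeftCancellable.extClass_comp {S : ShortComplex C} (hS : S.ShortExact)
    [Projective S.X₂] {W : C} {n m : ℕ} {ξ : Abelian.Ext S.X₁ W n} (hξ : IsExtLeftCancellable ξ)
    (h : 1 + n = m) : IsExtLeftCancellable (hS.extClass.comp ξ h) := by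
  intro Y j k z hk hz
  rw [Abelian.Ext.comp_assoc (h₂₃ := rfl) (h := by lia)] at hz
  obtain ⟨y, hy⟩ := Abelian.Ext.contravariant_sequence_exact₁ hS Y _ _ hz
  exact hξ z rfl (by rw [← hy, Abelian.Ext.eq_zero_of_projective (n := n + j) y,
    Abelian.Ext.comp_zero])

lemma ext_eq_zero_of_extClass_comp_eq_zero {S : ShortComplex C} (hS : S.ShortExact) {c i k : ℕ}
    [HasProjectiveDimensionLT S.X₂ c] (hi : c ≤ i) {M : C} (r : Retract M S.X₁) {Y : C}
    (x : Abelian.Ext M Y i) (hk : 1 + i = k)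
    (hx : hS.extClass.comp ((Abelian.Ext.mk₀ r.r).comp x (zero_add i)) hk = 0) : x = 0 := by
  obtain ⟨y, hy⟩ := Abelian.Ext.contravariant_sequence_exact₁ hS Y _ _ hx
  rw [← Abelian.Ext.mk₀_id_comp x, ← r.retract, ← Abelian.Ext.mk₀_comp_mk₀_assoc, ← hy,
    y.eq_zero_of_hasProjectiveDimensionLT c hi, Abelian.Ext.comp_zero, Abelian.Ext.comp_zero]

lemma ext_eq_zero_of_forall_comp_eq_zero {M Y : C} {d n N : ℕ} [HasInjectiveDimensionLT M d]
    (hM : ∀ ⦃i⦄, N ≤ i → ∀ x : Abelian.Ext M Y i,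
      (∀ θ : Abelian.Ext M M (n + 1), θ.comp x rfl = 0) → x = 0)
    {i : ℕ} (hi : N ≤ i) (x : Abelian.Ext M Y i) : x = 0 := by
  suffices key : ∀ t e, d ≤ e + t → ∀ (θ : Abelian.Ext M M e) (k : ℕ) (hk : e + i = k),
      θ.comp x hk = 0 by
    simpa using key d 0 (by lia) (Abelian.Ext.mk₀ (𝟙 M)) i (zero_add i)
  intro t
  induction t with
  | zero =>
    intro e he θ k hk
    rw [θ.eq_zero_of_hasInjectiveDimensionLT d he, Abelian.Ext.zero_comp]
  | succ t ih =>
    intro e he θ k hk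
    refine hM (by lia) _ fun θ' ↦ ?_
    rw [← Abelian.Ext.comp_assoc (h₁₂ := rfl) (h := by lia)]
    exact ih _ (by lia) _ _ _

end ReducingStep

section Syzygy

variable {R : Type u} [CommRing R] {M K L W : ModuleCat.{u} R} {n : ℕ}

lemma IsSyzygy.exists_isExtLeftCancellable (h : IsSyzygy R n W M) :
    ∃ ξ : Abelian.Ext M W n, IsExtLeftCancellable ξ := by
  induction n generalizing M with
  | zero => exact h.elim fun e ↦ ⟨_, isExtLeftCancellable_mk₀ e.symm.toModuleIso⟩
  | succ n ih =>
    obtain ⟨V, F, f, g, _, _, hses, hV⟩ := h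
    obtain ⟨ξ, hξ⟩ := ih hV
    have : Projective F := (IsProjective.iff_projective F).1 .of_free
    exact ⟨_, hξ.extClass_comp hses.shortExact (Nat.add_comm 1 n)⟩

lemma IsSyzygy.hasProjectiveDimensionLT {c : ℕ} (hc : HasProjectiveDimensionLT W c)
    (h : IsSyzygy R n W M) : HasProjectiveDimensionLT M (c + n + 1) := by
  induction n generalizing M with
  | zero =>
    have := h.elim fun e ↦ hasProjectiveDimensionLT_of_iso e.toModuleIso c
    exact hasProjectiveDimensionLT_of_ge M c _ (Nat.le_succ c)
  | succ n ih =>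
    obtain ⟨V, F, f, g, _, _, hses, hV⟩ := h
    have : Projective F := (IsProjective.iff_projective F).1 .of_free
    exact hses.shortExact.hasProjectiveDimensionLT_X₃ _ (ih hV)
      (hasProjectiveDimensionLT_of_ge F 1 _ (by lia))

lemma exists_isSyzygy [IsNoetherianRing R] (n : ℕ) (K : ModuleCat.{u} R) [Module.Finite R K] :
    ∃ V, IsSyzygy R n V K := by
  induction n generalizing K with
  | zero => exact ⟨K, ⟨LinearEquiv.refl R K⟩⟩
  | succ n ih =>
    obtain ⟨m, p, hp⟩ := Module.Finite.exists_fin' R K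
    obtain ⟨V, hV⟩ := ih (ModuleCat.of R (LinearMap.ker p))
    exact ⟨V, _, ModuleCat.of R (Fin m → R), _, _, inferInstanceAs (Module.Free R (Fin m → R)),
      inferInstanceAs (Module.Finite R (Fin m → R)), isShortExact_ker_subtype hp, hV⟩

lemma ext_eq_zero_of_forall_comp_eq_zero_of_isShortExact {a b c i : ℕ} (ha : 1 ≤ a)
    {f : (Fin a → M) →ₗ[R] L} {g : L →ₗ[R] (Fin b → W)} (h : IsShortExact R f g)
    [HasProjectiveDimensionLT L c] {ξ : Abelian.Ext M W n} (hξ : IsExtLeftCancellable ξ)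
    (hi : c ≤ i) {Y : ModuleCat.{u} R} (x : Abelian.Ext M Y i)
    (hx : ∀ θ : Abelian.Ext M M (n + 1), θ.comp x rfl = 0) : x = 0 := by
  let r := retractPi M (⟨0, ha⟩ : Fin a)
  have hS := h.shortExact
  refine ext_eq_zero_of_extClass_comp_eq_zero hS (c := c) hi r x (Nat.add_comm 1 i)
    (ext_pi_left_eq_zero fun l ↦ hξ _ (k := n + 1 + i) (by lia) ?_)
  have := hx (((ξ.comp (Abelian.Ext.mk₀ (ModuleCat.ofHom (LinearMap.single R (fun _ ↦ W) l)))
    (add_zero n)).comp hS.extClass rfl).comp (Abelian.Ext.mk₀ r.r) (add_zero _))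
  rwa [Abelian.Ext.comp_assoc_of_second_deg_zero, Abelian.Ext.comp_assoc (h₂₃ := Nat.add_comm 1 i)
    (h := by lia), Abelian.Ext.comp_assoc_of_second_deg_zero] at this

variable [IsNoetherianRing R]

lemma IsTotallyReflexiveOrthogonal.exists_hasProjectiveDimensionLT [Module.Finite R K]
    (hK : IsTotallyReflexiveOrthogonal K) (hn : GdimLE R n K) :
    ∃ c, HasProjectiveDimensionLT K c := by
  obtain ⟨V, hV⟩ := exists_isSyzygy (n + 1) K
  obtain ⟨ξ, hξ⟩ := hV.exists_isExtLeftCancellable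
  have hξ₀ : ξ = 0 :=
    ((hK.of_isSyzygy hV).subsingleton_ext_of_gdimLE hn le_rfl).elim ξ 0
  have : HasProjectiveDimensionLT V 1 := by
    rw [hasProjectiveDimensionLT_iff.{u}]
    intro i hi Y z
    obtain ⟨j, rfl⟩ := Nat.exists_eq_add_of_le' hi
    exact hξ z rfl (by rw [hξ₀, Abelian.Ext.zero_comp])
  exact ⟨_, hV.hasProjectiveDimensionLT this⟩

lemma ReducingStep.exists_hasProjectiveDimensionLT {a b d m : ℕ} [Module.Finite R L]
    [HasInjectiveDimensionLT M d] (ha : 1 ≤ a) (h : ReducingStep R M L a b n)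
    (hm : GdimLE R m L) : ∃ c, HasProjectiveDimensionLT M c := by
  obtain ⟨W, f, g, hW, hses⟩ := h
  have hM : IsTotallyReflexiveOrthogonal M := .of_hasInjectiveDimensionLT (d := d) inferInstance
  have hL := (hM.pi a).of_isShortExact_mid hses ((hM.of_isSyzygy hW).pi b)
  obtain ⟨c, hc⟩ := hL.exists_hasProjectiveDimensionLT hm
  obtain ⟨ξ, hξ⟩ := hW.exists_isExtLeftCancellable
  refine ⟨c, (hasProjectiveDimensionLT_iff.{u} M c).2 fun i hi Y x ↦ ?_⟩
  exact ext_eq_zero_of_forall_comp_eq_zero (d := d) (n := n) (fun i hi x hx ↦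
    ext_eq_zero_of_forall_comp_eq_zero_of_isShortExact ha hses hξ hi x hx) hi x

end Syzygy

section InjectiveCoresolution

variable {R : Type u} [CommRing R]

variable (R) in
/-- An injective coresolution `0 → A → I 0 → I 1 → ⋯`, given by modules and linear maps so that
one can compute with elements. -/
structure InjectiveCoresolution (A : Type u) [AddCommGroup A] [Module R A] where
  I : ℕ → ModuleCat.{u} R
  d (n : ℕ) : I n →ₗ[R] I (n + 1)
  η : A →ₗ[R] I 0
  injective (n : ℕ) : Module.Injective R (I n)
  η_injective : Function.Injective η
  exact_η_d : Function.Exact η (d 0)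
  exact_d_d (n : ℕ) : Function.Exact (d n) (d (n + 1))

variable {A B : Type u} [AddCommGroup A] [Module R A] [AddCommGroup B] [Module R B]

lemma nonempty_injectiveCoresolution : Nonempty (InjectiveCoresolution R A) := by
  let Q := injectiveResolution (ModuleCat.of R A)
  exact ⟨{
    I := Q.cocomplex.X
    d n := (Q.cocomplex.d n (n + 1)).hom
    η := (Q.ι.f 0).hom
    injective n := (Module.injective_iff_injective_object R _).2 (Q.injective n)
    η_injective := (ModuleCat.mono_iff_injective (Q.ι.f 0)).1 inferInstance
    exact_η_d := (ShortComplex.ShortExact.moduleCat_exact_iff_function_exact _).1 Q.exact₀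
    exact_d_d n :=
      (ShortComplex.ShortExact.moduleCat_exact_iff_function_exact _).1 (Q.exact_succ n) }⟩

namespace InjectiveCoresolution

/-- The coresolution `I 1 → I 2 → ⋯` of the first cosyzygy `ker (I 1 → I 2)`. -/
def tail (J : InjectiveCoresolution R A) : InjectiveCoresolution R (LinearMap.ker (J.d 1)) where
  I n := J.I (n + 1)
  d n := J.d (n + 1)
  η := (LinearMap.ker (J.d 1)).subtype
  injective n := J.injective (n + 1)
  η_injective := Subtype.val_injective
  exact_η_d := LinearMap.exact_subtype_ker_map _
  exact_d_d n := J.exact_d_d (n + 1)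

/-- The first differential, corestricted to the first cosyzygy. -/
def toTail (J : InjectiveCoresolution R A) : J.I 0 →ₗ[R] LinearMap.ker (J.d 1) :=
  (J.d 0).codRestrict _ (J.exact_d_d 0).apply_apply_eq_zero

lemma isShortExact_toTail (J : InjectiveCoresolution R A) : IsShortExact R J.η J.toTail := by
  refine ⟨J.η_injective, ?_, fun x ↦ ?_⟩
  · rintro ⟨y, hy⟩
    obtain ⟨x, rfl⟩ := (J.exact_d_d 0 y).1 hy
    exact ⟨x, rfl⟩
  · exact Subtype.ext_iff.trans (J.exact_η_d x)

/-- The maps `Φ n` form a morphism of complexes lifting `f`. -/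
def IsLift (I : InjectiveCoresolution R A) (J : InjectiveCoresolution R B) (f : A →ₗ[R] B)
    (Φ : ∀ n, I.I n →ₗ[R] J.I n) : Prop :=
  (∀ a, Φ 0 (I.η a) = J.η (f a)) ∧ ∀ n x, Φ (n + 1) (I.d n x) = J.d n (Φ n x)

lemma IsLift.exists_tail {I : InjectiveCoresolution R A} {J : InjectiveCoresolution R B}
    {f : A →ₗ[R] B} {Φ : ∀ n, I.I n →ₗ[R] J.I n} (h : I.IsLift J f Φ) :
    ∃ f' : LinearMap.ker (I.d 1) →ₗ[R] LinearMap.ker (J.d 1),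
      f' ∘ₗ I.toTail = J.toTail ∘ₗ Φ 0 ∧ I.tail.IsLift J.tail f' fun n ↦ Φ (n + 1) := by
  refine ⟨(Φ 1).restrict fun x hx ↦ ?_, LinearMap.ext fun x ↦ Subtype.ext (h.2 0 x),
    fun _ ↦ rfl, fun n ↦ h.2 (n + 1)⟩
  rw [LinearMap.mem_ker, ← h.2, LinearMap.mem_ker.1 hx, map_zero]

lemma IsLift.ext_comp_eq_zero {I : InjectiveCoresolution R A} {J : InjectiveCoresolution R B}
    {f : A →ₗ[R] B} {Φ : ∀ n, I.I n →ₗ[R] J.I n} (h : I.IsLift J f Φ) {X : ModuleCat.{u} R}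
    (hX : ∀ n (y : X →ₗ[R] I.I n), Φ n ∘ₗ y = 0) {n : ℕ}
    (x : Abelian.Ext X (ModuleCat.of R A) n) :
    x.comp (Abelian.Ext.mk₀ (ModuleCat.ofHom f)) (add_zero n) = 0 := by
  induction n generalizing A B with
  | zero =>
    obtain ⟨y, rfl⟩ := (Abelian.Ext.mk₀_bijective _ _).2 x
    have hy : y ≫ ModuleCat.ofHom f = 0 := by
      ext v
      refine J.η_injective ((h.1 (y.hom v)).symm.trans ?_)
      exact (LinearMap.congr_fun (hX 0 (I.η ∘ₗ y.hom)) v).trans (map_zero J.η).symm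
    rw [Abelian.Ext.mk₀_comp_mk₀, hy, Abelian.Ext.mk₀_zero]
  | succ n ih =>
    obtain ⟨f', hf', h'⟩ := h.exists_tail
    have hI := I.isShortExact_toTail.shortExact
    have hJ := J.isShortExact_toTail.shortExact
    have : Injective (I.isShortExact_toTail.shortComplex.X₂) :=
      (Module.injective_iff_injective_object R _).1 (I.injective 0)
    obtain ⟨x, rfl⟩ := Abelian.Ext.covariant_sequence_exact₁ X hI x
      (Abelian.Ext.eq_zero_of_injective _) rfl
    let τ : I.isShortExact_toTail.shortComplex ⟶ J.isShortExact_toTail.shortComplex :=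
      { τ₁ := ModuleCat.ofHom f
        τ₂ := ModuleCat.ofHom (Φ 0)
        τ₃ := ModuleCat.ofHom f'
        comm₁₂ := ModuleCat.hom_ext (LinearMap.ext fun a ↦ (h.1 a).symm)
        comm₂₃ := ModuleCat.hom_ext hf'.symm }
    have naturality := ShortComplex.ShortExact.extClass_naturality hI hJ τ
    have hx := ih h' (fun n ↦ hX (n + 1)) x
    rw [Abelian.Ext.comp_assoc_of_third_deg_zero, naturality,
      ← Abelian.Ext.comp_assoc_of_second_deg_zero, hx, Abelian.Ext.zero_comp]

end InjectiveCoresolution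

end InjectiveCoresolution

section SocleModel

variable {R : Type u} [CommRing R]

lemma IsShortExact.injective_right {A B C : Type u} [AddCommGroup A] [Module R A] [AddCommGroup B]
    [Module R B] [AddCommGroup C] [Module R C] {f : A →ₗ[R] B} {g : B →ₗ[R] C}
    (h : IsShortExact R f g) [hA : Module.Injective R A] [hB : Module.Injective R B] :
    Module.Injective R C := by
  have : HasInjectiveDimensionLT h.shortComplex.X₁ 1 :=
    injective_iff_hasInjectiveDimensionLT_one.1 ((Module.injective_iff_injective_object R A).1 hA)
  have : HasInjectiveDimensionLT h.shortComplex.X₁ 2 := hasInjectiveDimensionLT_of_ge _ 1 2 (by lia)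
  have : HasInjectiveDimensionLT h.shortComplex.X₂ 1 :=
    injective_iff_hasInjectiveDimensionLT_one.1 ((Module.injective_iff_injective_object R B).1 hB)
  exact (Module.injective_iff_injective_object R C).2
    (injective_iff_hasInjectiveDimensionLT_one.2
      (h.shortExact.hasInjectiveDimensionLT_X₃ 1 ‹_› ‹_›))

lemma hasProjectiveDimensionLT_ker {m c : ℕ} {M : ModuleCat.{u} R} {p : (Fin m → R) →ₗ[R] M}
    (hp : Function.Surjective p) (hM : HasProjectiveDimensionLT M (c + 2)) :
    HasProjectiveDimensionLT (ModuleCat.of R (LinearMap.ker p)) (c + 1) :=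
  ((isShortExact_ker_subtype hp).shortExact.hasProjectiveDimensionLT_X₃_iff c
    ((IsProjective.iff_projective _).1 (Module.Projective.of_free (P := Fin m → R)))).1 hM

lemma module_injective_of_subsingleton (A : Type u) [AddCommGroup A] [Module R A]
    [Subsingleton A] : Module.Injective R A :=
  ⟨fun _ _ _ _ _ _ _ _ _ ↦ ⟨0, fun _ ↦ Subsingleton.elim _ _⟩⟩

lemma module_injective_prod {A B : Type u} [AddCommGroup A] [Module R A] [AddCommGroup B]
    [Module R B] (hA : Module.Injective R A) (hB : Module.Injective R B) :
    Module.Injective R (A × B) := by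
  refine ⟨fun X Y _ _ _ _ f hf g ↦ ?_⟩
  obtain ⟨a, ha⟩ := hA.out f hf (LinearMap.fst R A B ∘ₗ g)
  obtain ⟨b, hb⟩ := hB.out f hf (LinearMap.snd R A B ∘ₗ g)
  exact ⟨a.prod b, fun x ↦ Prod.ext (ha x) (hb x)⟩

lemma exact_compLeft {A B C : Type*} [AddCommGroup A] [Module R A] [AddCommGroup B] [Module R B]
    [AddCommGroup C] [Module R C] {f : A →ₗ[R] B} {g : B →ₗ[R] C} (h : Function.Exact f g)
    (ι : Type*) : Function.Exact (f.compLeft ι) (g.compLeft ι) := by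
  intro y
  rw [funext_iff, Set.mem_range]
  refine ⟨fun hy ↦ ?_, ?_⟩
  · choose x hx using fun l ↦ (h (y l)).1 (hy l)
    exact ⟨x, funext hx⟩
  · rintro ⟨x, rfl⟩ l
    exact h.apply_apply_eq_zero (x l)

lemma sum_apply_single_smul {m : ℕ} (ψ : Module.Dual R (Fin m → R)) (q : Fin m → R) :
    ∑ l, ψ (Pi.single l 1) • q l = ψ q := by
  conv_rhs => rw [← Finset.univ_sum_single q, map_sum]
  refine Finset.sum_congr rfl fun l _ ↦ ?_
  rw [smul_eq_mul, mul_comm, ← smul_eq_mul, ← map_smul, ← Pi.single_smul, smul_eq_mul, mul_one]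

section ConeMap

variable {A B C A' B' C' : Type*} [AddCommGroup A] [Module R A] [AddCommGroup B] [Module R B]
  [AddCommGroup C] [Module R C] [AddCommGroup A'] [Module R A'] [AddCommGroup B'] [Module R B']
  [AddCommGroup C'] [Module R C']

/-- The differential `(x, y) ↦ (a x, θ x + b y)` of a mapping cone. The usual sign is absorbed
into `θ`, which is required to anticommute with the differentials. -/
def coneMap (a : A →ₗ[R] B) (b : A' →ₗ[R] B') (θ : A →ₗ[R] B') : A × A' →ₗ[R] B × B' :=
  (a ∘ₗ LinearMap.fst R A A').prod (θ.coprod b)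

lemma exact_coneMap {a : A →ₗ[R] B} {a' : B →ₗ[R] C} {b : A' →ₗ[R] B'} {b' : B' →ₗ[R] C'}
    {θ : A →ₗ[R] B'} {θ' : B →ₗ[R] C'} (ha : Function.Exact a a') (hb : Function.Exact b b')
    (hθ : ∀ x, θ' (a x) + b' (θ x) = 0) :
    Function.Exact (coneMap a b θ) (coneMap a' b' θ') := by
  rintro ⟨x, y⟩
  rw [Set.mem_range, show coneMap a' b' θ' (x, y) = (a' x, θ' x + b' y) from rfl,
    Prod.mk_eq_zero]
  refine ⟨fun ⟨hx, hy⟩ ↦ ?_, ?_⟩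
  · obtain ⟨x, rfl⟩ := (ha x).1 hx
    have hy' : b' (y - θ x) = 0 := by
      rw [map_sub, sub_eq_zero, ← add_right_inj (θ' (a x)), hy, hθ]
    obtain ⟨z, hz⟩ := (hb _).1 hy'
    exact ⟨(x, z), Prod.ext rfl (by simp [coneMap, hz])⟩
  · rintro ⟨⟨x, z⟩, hz⟩
    obtain ⟨rfl, rfl⟩ := Prod.ext_iff.1 hz
    refine ⟨ha.apply_apply_eq_zero x, ?_⟩
    have := hb.apply_apply_eq_zero z
    simpa [coneMap, this] using hθ x

end ConeMap

/-- A device for computing the maps `Ext^n(k, K) → Ext^n(k, R)` induced by functionals `K → R`.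
The module `Z` maps onto `K` with injective kernel, so that `Ext^n(k, Z) → Ext^n(k, K)` is onto,
and its injective coresolution `J` maps to the coresolution `I` of `R` by lifts
`Φ φ` of the functionals `φ` which are strictly zero on socles when `φ` takes values in the
maximal ideal. -/
structure SocleModel [IsLocalRing R] (I : InjectiveCoresolution R R) (K : Type u)
    [AddCommGroup K] [Module R K] where
  Z : ModuleCat.{u} R
  J : InjectiveCoresolution R Z
  ε : Z →ₗ[R] K
  ε_surjective : Function.Surjective ε
  injective_ker : Module.Injective R (LinearMap.ker ε)
  Φ (n : ℕ) : Module.Dual R K →ₗ[R] J.I n →ₗ[R] I.I n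
  isLift (φ : Module.Dual R K) : J.IsLift I (φ ∘ₗ ε) fun n ↦ Φ n φ
  apply_eq_zero (φ : Module.Dual R K) (hφ : ∀ k, φ k ∈ IsLocalRing.maximalIdeal R) (n : ℕ)
    (x : J.I n) (hx : ∀ r ∈ IsLocalRing.maximalIdeal R, r • x = 0) : Φ n φ x = 0

namespace SocleModel

variable [IsLocalRing R] {I : InjectiveCoresolution R R} {K : Type u} [AddCommGroup K]
  [Module R K]

/-- The zero model of a zero module. -/
def zero (I : InjectiveCoresolution R R) (K : Type u) [AddCommGroup K] [Module R K]
    [Subsingleton K] : SocleModel I K where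
  Z := ModuleCat.of R PUnit
  J :=
    { I _ := ModuleCat.of R PUnit
      d _ := 0
      η := 0
      injective _ := module_injective_of_subsingleton PUnit
      η_injective _ _ _ := rfl
      exact_η_d _ := ⟨fun _ ↦ ⟨0, rfl⟩, fun _ ↦ rfl⟩
      exact_d_d _ _ := ⟨fun _ ↦ ⟨0, rfl⟩, fun _ ↦ rfl⟩ }
  ε := 0
  ε_surjective _ := ⟨0, Subsingleton.elim _ _⟩
  injective_ker := module_injective_of_subsingleton _
  Φ _ := 0
  isLift φ := ⟨fun _ ↦ by simp, fun _ _ ↦ by simp⟩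
  apply_eq_zero _ _ _ _ _ := rfl

section Cone

variable {M : Type u} [AddCommGroup M] [Module R M] {m : ℕ} (D : SocleModel I K)
  (i : K →ₗ[R] Fin m → R)

/-- The components `J n → (I n)^m` of the lift of `i : K → R^m`, with alternating signs. -/
def signedLift (n : ℕ) : D.J.I n →ₗ[R] Fin m → I.I n :=
  (-1 : R) ^ (n + 1) • LinearMap.pi fun l ↦ D.Φ n (LinearMap.proj l ∘ₗ i)

lemma signedLift_η (z : D.Z) :
    D.signedLift i 0 (D.J.η z) = -I.η.compLeft (Fin m) (i (D.ε z)) := by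
  ext l
  simpa [signedLift] using (D.isLift (LinearMap.proj l ∘ₗ i)).1 z

lemma signedLift_d (n : ℕ) (x : D.J.I n) :
    D.signedLift i (n + 1) (D.J.d n x) + (I.d n).compLeft (Fin m) (D.signedLift i n x) = 0 := by
  ext l
  simp [signedLift, (D.isLift (LinearMap.proj l ∘ₗ i)).2 n x, pow_succ]

/-- The map `z ↦ (η z, i (ε z))`, whose cokernel is the pushout of `J 0` and `R^m` along `Z`. -/
def pushoutRel : D.Z →ₗ[R] D.J.I 0 × (Fin m → R) :=
  D.J.η.prod (i ∘ₗ D.ε)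

/-- The differential in degree `-1` of the mapping cone of `J → I^m`. -/
def coneAugmentation : D.J.I 0 × (Fin m → R) →ₗ[R] D.J.I 1 × (Fin m → I.I 0) :=
  coneMap (D.J.d 0) (I.η.compLeft (Fin m)) (D.signedLift i 0)

lemma exact_pushoutRel_coneAugmentation :
    Function.Exact (D.pushoutRel i) (D.coneAugmentation i) := by
  have η_injective : Function.Injective (I.η.compLeft (Fin m)) := I.η_injective.comp_left
  have apply_relation (z : D.Z) (q : Fin m → R) :
      D.coneAugmentation i (D.J.η z, q) = (0, I.η.compLeft (Fin m) (q - i (D.ε z))) := by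
    simp [coneAugmentation, coneMap, D.J.exact_η_d.apply_apply_eq_zero, signedLift_η,
      neg_add_eq_sub]
  rintro ⟨x, q⟩
  refine ⟨fun h ↦ ?_, ?_⟩
  · obtain ⟨z, rfl⟩ := (D.J.exact_η_d x).1 (Prod.ext_iff.1 h).1
    have hq : q - i (D.ε z) = 0 :=
      η_injective ((Prod.ext_iff.1 ((apply_relation z q).symm.trans h)).2.trans (map_zero _).symm)
    exact ⟨z, Prod.ext rfl (sub_eq_zero.1 hq).symm⟩
  · rintro ⟨z, hz⟩
    rw [← hz]
    exact (apply_relation z _).trans (by simp)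

/-- The pushout of `J 0` and `R^m` along `Z`, coresolved by the mapping cone of `J → I^m`. -/
def coneCoresolution :
    InjectiveCoresolution R ((D.J.I 0 × (Fin m → R)) ⧸ LinearMap.range (D.pushoutRel i)) where
  I n := ModuleCat.of R (D.J.I (n + 1) × (Fin m → I.I n))
  d n := coneMap (D.J.d (n + 1)) ((I.d n).compLeft (Fin m)) (D.signedLift i (n + 1))
  η := Submodule.liftQ _ (D.coneAugmentation i)
    (D.exact_pushoutRel_coneAugmentation i).linearMap_ker_eq.ge
  injective n :=
    have := I.injective n
    module_injective_prod (D.J.injective (n + 1)) (Module.Injective.pi R fun _ ↦ I.I n)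
  η_injective := LinearMap.ker_eq_bot.1 (Submodule.ker_liftQ_eq_bot' _ _
    (D.exact_pushoutRel_coneAugmentation i).linearMap_ker_eq.symm)
  exact_η_d := by
    have h : Function.Exact (D.coneAugmentation i) _ :=
      exact_coneMap (D.J.exact_d_d 0) (exact_compLeft I.exact_η_d (Fin m)) (D.signedLift_d i 0)
    rw [LinearMap.exact_iff, Submodule.range_liftQ]
    exact h.linearMap_ker_eq
  exact_d_d n := exact_coneMap (D.J.exact_d_d (n + 1)) (exact_compLeft (I.exact_d_d n) _)
    (D.signedLift_d i (n + 1))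

variable {i} {p : (Fin m → R) →ₗ[R] M} (h : IsShortExact R i p)

/-- The map from the pushout of `J 0` and `R^m` along `Z` onto `M`. -/
def coneProj : (D.J.I 0 × (Fin m → R)) ⧸ LinearMap.range (D.pushoutRel i) →ₗ[R] M :=
  Submodule.liftQ _ (p ∘ₗ LinearMap.snd R _ _) (by
    rintro _ ⟨z, rfl⟩
    exact h.2.2.apply_apply_eq_zero (D.ε z))

lemma isShortExact_ker_coneProj :
    ∃ g : D.J.I 0 →ₗ[R] LinearMap.ker (D.coneProj h),
      IsShortExact R (D.J.η ∘ₗ (LinearMap.ker D.ε).subtype) g := by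
  refine ⟨(Submodule.mkQ _ ∘ₗ LinearMap.inl R (D.J.I 0) (Fin m → R)).codRestrict _
    fun _ ↦ map_zero p,
    D.J.η_injective.comp Subtype.val_injective, ?_, fun x ↦ ?_⟩
  · rintro ⟨w, hw⟩
    obtain ⟨⟨x, q⟩, rfl⟩ := Submodule.mkQ_surjective _ w
    obtain ⟨k, rfl⟩ := (h.2.2 q).1 hw
    obtain ⟨z, rfl⟩ := D.ε_surjective k
    refine ⟨x - D.J.η z, Subtype.ext ((Submodule.Quotient.eq _).2 ⟨-z, ?_⟩)⟩
    simp [pushoutRel]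
  · rw [Subtype.ext_iff]
    refine (Submodule.Quotient.mk_eq_zero _).trans ⟨?_, ?_⟩
    · rintro ⟨z, hz⟩
      obtain ⟨rfl, hz⟩ := Prod.ext_iff.1 hz
      exact ⟨⟨z, h.1 (hz.trans (map_zero i).symm)⟩, rfl⟩
    · rintro ⟨⟨z, hz⟩, rfl⟩
      exact ⟨z, Prod.ext rfl ((congrArg i hz).trans (map_zero i))⟩

variable (p) in
/-- The value `(x, y) ↦ ∑ l, φ (p e_l) • y l` of a functional `φ : M → R` on the cone. -/
def coneLift (n : ℕ) :
    Module.Dual R M →ₗ[R] D.J.I (n + 1) × (Fin m → I.I n) →ₗ[R] I.I n :=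
  ((Fintype.bilinearCombination R R).flip ∘ₗ
    LinearMap.pi fun l ↦ Module.Dual.eval R M (p (Pi.single l 1))).compl₂ (LinearMap.snd R _ _)

lemma coneLift_apply (n : ℕ) (φ : Module.Dual R M) (x : D.J.I (n + 1)) (y : Fin m → I.I n) :
    D.coneLift p n φ (x, y) = ∑ l, φ (p (Pi.single l 1)) • y l := rfl

include h in
lemma sum_smul_signedLift (φ : Module.Dual R M) (n : ℕ) (x : D.J.I n) :
    ∑ l, φ (p (Pi.single l 1)) • D.signedLift i n x l = 0 := by
  have hφ : ∑ l, φ (p (Pi.single l 1)) • LinearMap.proj l ∘ₗ i = 0 := by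
    ext k
    rw [LinearMap.sum_apply]
    exact (sum_apply_single_smul (φ ∘ₗ p) (i k)).trans (by simp [h.2.2.apply_apply_eq_zero k])
  calc ∑ l, φ (p (Pi.single l 1)) • D.signedLift i n x l
      = (-1 : R) ^ (n + 1) • D.Φ n (∑ l, φ (p (Pi.single l 1)) • LinearMap.proj l ∘ₗ i) x := by
        rw [map_sum, LinearMap.sum_apply, Finset.smul_sum]
        refine Finset.sum_congr rfl fun l _ ↦ ?_
        rw [map_smul, LinearMap.smul_apply, smul_comm]
        rfl
    _ = 0 := by rw [hφ, map_zero, LinearMap.zero_apply, smul_zero]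

include h in
lemma coneLift_signedLift_add {N : Type*} [AddCommGroup N] [Module R N] (φ : Module.Dual R M)
    (n : ℕ) (b : N →ₗ[R] I.I n) (x : D.J.I n) (x' : D.J.I (n + 1)) (y : Fin m → N) :
    D.coneLift p n φ (x', D.signedLift i n x + b.compLeft (Fin m) y) =
      b (∑ l, φ (p (Pi.single l 1)) • y l) := by
  simp only [coneLift_apply, Pi.add_apply, smul_add, Finset.sum_add_distrib,
    D.sum_smul_signedLift h, zero_add, map_sum, map_smul, LinearMap.compLeft_apply,
    Function.comp_apply]

/-- The model of `M` given by the mapping cone of the lift of `i`. -/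
def cone : SocleModel I M where
  Z := ModuleCat.of R ((D.J.I 0 × (Fin m → R)) ⧸ LinearMap.range (D.pushoutRel i))
  J := D.coneCoresolution i
  ε := D.coneProj h
  ε_surjective k :=
    have ⟨q, hq⟩ := h.2.1 k
    ⟨Submodule.Quotient.mk (0, q), hq⟩
  injective_ker :=
    have ⟨_, hg⟩ := D.isShortExact_ker_coneProj h
    have := D.injective_ker
    have := D.J.injective 0
    hg.injective_right
  Φ n := D.coneLift p n
  isLift φ := by
    refine ⟨fun a ↦ ?_, fun n x ↦ D.coneLift_signedLift_add h φ (n + 1) (I.d n) x.1 _ x.2⟩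
    obtain ⟨⟨x, q⟩, rfl⟩ := Submodule.mkQ_surjective _ a
    exact (D.coneLift_signedLift_add h φ 0 I.η x _ q).trans
      (congrArg I.η (sum_apply_single_smul (φ ∘ₗ p) q))
  apply_eq_zero φ hφ n x hx := (D.coneLift_apply n φ x.1 x.2).trans <|
    Finset.sum_eq_zero fun l _ ↦ congrFun (Prod.ext_iff.1 (hx _ (hφ (p (Pi.single l 1))))).2 l

end Cone

/-- The model of a finite free module with basis `b`. -/
noncomputable def ofBasis (I : InjectiveCoresolution R R) {m : ℕ} (b : Module.Basis (Fin m) R K) :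
    SocleModel I K :=
  (zero I PUnit).cone (i := (0 : PUnit.{u + 1} →ₗ[R] Fin m → R))
    (p := b.equivFun.symm.toLinearMap)
    ⟨Function.injective_of_subsingleton _, b.equivFun.symm.surjective,
      (LinearMap.exact_zero_iff_injective _ _).2 b.equivFun.symm.injective⟩

lemma nonempty_of_hasProjectiveDimensionLT [IsNoetherianRing R] (I : InjectiveCoresolution R R)
    {K : ModuleCat.{u} R} [Module.Finite R K] {c : ℕ} (hK : HasProjectiveDimensionLT K c) :
    Nonempty (SocleModel I K) := by
  induction c generalizing K with
  | zero =>
    have : Subsingleton K :=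
      ModuleCat.subsingleton_of_isZero ((hasProjectiveDimensionLT_zero_iff_isZero K).1 hK)
    exact ⟨zero I K⟩
  | succ c ih =>
    rcases c with _ | c
    · have : Module.Projective R K :=
        (IsProjective.iff_projective K).2 (projective_iff_hasProjectiveDimensionLT_one.2 hK)
      have : Module.Free R K := Module.free_of_flat_of_isLocalRing
      exact ⟨ofBasis I ((Module.Free.chooseBasis R K).reindex (Fintype.equivFin _))⟩
    · obtain ⟨m, p, hp⟩ := Module.Finite.exists_fin' R K
      have : Module.Finite R (ModuleCat.of R (LinearMap.ker p)) :=
        Module.IsNoetherian.finite R (LinearMap.ker p)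
      obtain ⟨D⟩ := ih (hasProjectiveDimensionLT_ker hp hK)
      exact ⟨D.cone (isShortExact_ker_subtype hp)⟩

lemma ext_comp_eq_zero (D : SocleModel I K) {φ : Module.Dual R K}
    (hφ : ∀ k, φ k ∈ IsLocalRing.maximalIdeal R) {X : ModuleCat.{u} R}
    (hX : ∀ r ∈ IsLocalRing.maximalIdeal R, ∀ x : X, r • x = 0) {n : ℕ}
    (x : Abelian.Ext X (ModuleCat.of R K) n) :
    x.comp (Abelian.Ext.mk₀ (ModuleCat.ofHom φ)) (add_zero n) = 0 := by
  have hε := (isShortExact_ker_subtype D.ε_surjective).shortExact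
  have : Injective (isShortExact_ker_subtype D.ε_surjective).shortComplex.X₁ :=
    (Module.injective_iff_injective_object R _).1 D.injective_ker
  obtain ⟨z, rfl⟩ := Abelian.Ext.covariant_sequence_exact₃ X hε x rfl
    (Abelian.Ext.eq_zero_of_injective _)
  rw [Abelian.Ext.comp_assoc_of_third_deg_zero, Abelian.Ext.mk₀_comp_mk₀]
  refine (D.isLift φ).ext_comp_eq_zero (fun l y ↦ LinearMap.ext fun v ↦ ?_) z
  exact D.apply_eq_zero φ hφ l (y v) fun r hr ↦ by rw [← map_smul, hX r hr, map_zero]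

end SocleModel

end SocleModel

section Foxby

variable {R : Type u} [CommRing R]

lemma hasInjectiveDimensionLT_of_injdimLE {n : ℕ} {M : ModuleCat.{u} R} (h : InjdimLE R n M) :
    HasInjectiveDimensionLT M (n + 1) := by
  induction n generalizing M with
  | zero =>
    have : Injective M := (Module.injective_iff_injective_object R M).1 h
    exact injective_iff_hasInjectiveDimensionLT_one.1 this
  | succ n ih =>
    obtain ⟨I, C, f, g, hI, hs, hC⟩ := h
    have : Injective I := (Module.injective_iff_injective_object R I).1 hI
    exact hs.shortExact.hasInjectiveDimensionLT_X₁ (n + 1) (ih hC)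
      (hasInjectiveDimensionLT_of_ge I 1 _ (by lia))

lemma injdimLE_of_subsingleton_ext {N : ℕ} {X : ModuleCat.{u} R}
    (h : ∀ (I : Ideal R) (n : ℕ), N < n → Subsingleton (Abelian.Ext (ModuleCat.of R (R ⧸ I)) X n)) :
    InjdimLE R N X := by
  induction N generalizing X with
  | zero =>
    refine Module.Baer.injective fun I φ ↦ ?_
    have hs : IsShortExact R I.subtype I.mkQ :=
      ⟨Subtype.val_injective, I.mkQ_surjective, LinearMap.exact_subtype_mkQ I⟩
    obtain ⟨ψ, hψ⟩ := hs.exists_comp_eq_of_subsingleton_ext (h I 1 zero_lt_one) φ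
    exact ⟨ψ, fun x hx ↦ LinearMap.congr_fun hψ ⟨x, hx⟩⟩
  | succ N ih =>
    obtain ⟨P⟩ := EnoughInjectives.presentation X
    have hf : Function.Injective P.f.hom := (ModuleCat.mono_iff_injective P.f).1 P.mono
    have hs : IsShortExact R P.f.hom (LinearMap.range P.f.hom).mkQ :=
      ⟨hf, Submodule.mkQ_surjective _, LinearMap.exact_map_mkQ_range _⟩
    refine ⟨P.J, ModuleCat.of R (P.J ⧸ LinearMap.range P.f.hom), _, _,
      (Module.injective_iff_injective_object R P.J).2 P.injective, hs, ih fun I n hn ↦ ?_⟩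
    obtain ⟨n, rfl⟩ := Nat.exists_eq_add_of_lt hn
    have : Injective hs.shortComplex.X₂ := P.injective
    exact subsingleton_ext_X₃_right hs.shortExact (h I _ (by lia))
      (subsingleton_of_forall_eq 0 Abelian.Ext.eq_zero_of_injective)

lemma isShortExact_mapQ_lsmul {I J : Ideal R} {a : R}
    (hJ : Submodule.comap (LinearMap.lsmul R R a) I = J) :
    IsShortExact R (Submodule.mapQ J I (LinearMap.lsmul R R a) hJ.ge)
      (Submodule.factor (le_sup_left : I ≤ I ⊔ Ideal.span {a})) := by
  subst hJ
  refine ⟨?_, Submodule.factor_surjective _, ?_⟩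
  · exact LinearMap.ker_eq_bot.1
      (Submodule.ker_liftQ_eq_bot' _ _ (by rw [LinearMap.ker_comp, Submodule.ker_mkQ]))
  · have hrange : LinearMap.range (LinearMap.lsmul R R a) = Ideal.span {a} := by
      ext x
      simp [Ideal.mem_span_singleton', mul_comm, eq_comm]
    rw [LinearMap.exact_iff, Submodule.range_mapQ, hrange, Submodule.factor, Submodule.mapQ,
      Submodule.ker_liftQ, LinearMap.comp_id, Submodule.ker_mkQ, Submodule.map_sup,
      Submodule.mkQ_map_self, bot_sup_eq]

section NoetherianInduction

variable [IsNoetherianRing R] [IsLocalRing R] {Y : ModuleCat.{u} R} [Module.Finite R Y]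
  {I : Ideal R} {n : ℕ}

lemma subsingleton_ext_of_forall_exists_smul_eq {X : ModuleCat.{u} R} [Module.Finite R X] {a : R}
    (ha : a ∈ IsLocalRing.maximalIdeal R) (h : ∀ x : Abelian.Ext X Y n, ∃ y, a • y = x) :
    Subsingleton (Abelian.Ext X Y n) := by
  have := ModuleCat.finite_ext R X Y n
  have hbot : (⊤ : Submodule R (Abelian.Ext X Y n)) = ⊥ :=
    Submodule.eq_bot_of_le_smul_of_le_jacobson_bot (IsLocalRing.maximalIdeal R) ⊤
      Module.Finite.fg_top
      (fun x _ ↦ by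
        obtain ⟨y, rfl⟩ := h x
        exact Submodule.smul_mem_smul ha trivial)
      (IsLocalRing.maximalIdeal_le_jacobson ⊥)
  exact (Submodule.subsingleton_iff R).1 (subsingleton_of_bot_eq_top hbot.symm)

lemma subsingleton_ext_quotient_of_isPrime (hI : I.IsPrime) {a : R}
    (ha : a ∈ IsLocalRing.maximalIdeal R) (haI : a ∉ I)
    (h : Subsingleton (Abelian.Ext (ModuleCat.of R (R ⧸ I ⊔ Ideal.span {a})) Y (n + 1))) :
    Subsingleton (Abelian.Ext (ModuleCat.of R (R ⧸ I)) Y n) := by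
  have : Module.Finite R (ModuleCat.of R (R ⧸ I)) := inferInstanceAs (Module.Finite R (R ⧸ I))
  refine subsingleton_ext_of_forall_exists_smul_eq ha fun x ↦ ?_
  have hJ : Submodule.comap (LinearMap.lsmul R R a) I = I :=
    Submodule.ext fun r ↦ hI.mul_mem_iff_mem_or_mem.trans (or_iff_right haI)
  have hs := isShortExact_mapQ_lsmul hJ
  obtain ⟨y, rfl⟩ := Abelian.Ext.contravariant_sequence_exact₁ hs.shortExact Y x
    (Nat.add_comm 1 n) (Subsingleton.elim _ _)
  have hf : hs.shortComplex.f = a • 𝟙 (ModuleCat.of R (R ⧸ I)) :=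
    ModuleCat.hom_ext (Submodule.linearMap_qext I rfl)
  refine ⟨y, ?_⟩
  rw [hf, Abelian.Ext.mk₀_smul, Abelian.Ext.smul_comp, Abelian.Ext.mk₀_id_comp]

lemma subsingleton_ext_quotient {N : ℕ}
    (hN : ∀ n, N ≤ n → Subsingleton (Abelian.Ext (ModuleCat.of R (IsLocalRing.ResidueField R)) Y n))
    (hn : N ≤ n) : Subsingleton (Abelian.Ext (ModuleCat.of R (R ⧸ I)) Y n) := by
  induction I using WellFoundedGT.induction generalizing n with
  | ind I ih =>
  have lt_sup {a : R} (ha : a ∉ I) : I < I ⊔ Ideal.span {a} :=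
    left_lt_sup.2 fun h ↦ ha (h (Ideal.mem_span_singleton_self a))
  by_cases hI : I.IsPrime
  · by_cases hmax : I = IsLocalRing.maximalIdeal R
    · subst hmax
      exact hN n hn
    · have hlt : I < IsLocalRing.maximalIdeal R :=
        (IsLocalRing.le_maximalIdeal hI.ne_top).lt_of_ne hmax
      obtain ⟨a, ha, haI⟩ := SetLike.exists_of_lt hlt
      exact subsingleton_ext_quotient_of_isPrime hI ha haI (ih _ (lt_sup haI) (by lia))
  · rcases (Ideal.not_isPrime_iff).1 hI with rfl | ⟨a, haI, b, hbI, hab⟩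
    · have : HasProjectiveDimensionLT (ModuleCat.of R (R ⧸ (⊤ : Ideal R))) 0 :=
        (ModuleCat.isZero_of_subsingleton _).hasProjectiveDimensionLT_zero
      exact HasProjectiveDimensionLT.subsingleton _ 0 n n.zero_le Y
    · have hs := isShortExact_mapQ_lsmul (I := I) (a := a) rfl
      have hlt : I < Submodule.comap (LinearMap.lsmul R R a) I :=
        SetLike.lt_iff_le_and_exists.2 ⟨fun r hr ↦ I.mul_mem_left a hr, b, hab, hbI⟩
      exact subsingleton_ext_X₂_left hs.shortExact (ih _ hlt hn) (ih _ (lt_sup haI) hn)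

end NoetherianInduction

section MinimalCover

variable [IsLocalRing R]

lemma exists_surjective_forall_mem_maximalIdeal (M : Type*) [AddCommGroup M] [Module R M]
    [Module.Finite R M] :
    ∃ (m : ℕ) (p : (Fin m → R) →ₗ[R] M), Function.Surjective p ∧
      ∀ v, p v = 0 → ∀ l, v l ∈ IsLocalRing.maximalIdeal R := by
  let k := IsLocalRing.ResidueField R
  let b := Module.finBasis k (TensorProduct R k M)
  choose w hw using fun l ↦
    TensorProduct.mk_surjective R M k Ideal.Quotient.mk_surjective (b l)
  refine ⟨_, Fintype.linearCombination R w, ?_, fun v hv l ↦ ?_⟩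
  · rw [← LinearMap.range_eq_top, Fintype.range_linearCombination]
    exact IsLocalRing.span_eq_top_of_tmul_eq_basis w b hw
  · have hb : ∑ l, IsLocalRing.residue R (v l) • b l = 0 := by
      have := congrArg (TensorProduct.mk R k M 1) hv
      simp only [Fintype.linearCombination_apply, map_sum, map_smul, hw, map_zero] at this
      exact this
    exact (IsLocalRing.residue_eq_zero_iff _).1
      (Fintype.linearIndependent_iff.1 b.linearIndependent _ hb l)

variable [IsNoetherianRing R] {M : ModuleCat.{u} R} [Module.Finite R M] [Nontrivial M] {c d n : ℕ}

lemma subsingleton_ext_of_hasProjectiveDimensionLT_of_hasInjectiveDimensionLT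
    (hc : HasProjectiveDimensionLT M c) [HasInjectiveDimensionLT M d] (hn : d ≤ n)
    {X : ModuleCat.{u} R} (hX : ∀ r ∈ IsLocalRing.maximalIdeal R, ∀ x : X, r • x = 0) :
    Subsingleton (Abelian.Ext X (ModuleCat.of R R) n) := by
  obtain ⟨m, p, hp, hmin⟩ := exists_surjective_forall_mem_maximalIdeal (R := R) M
  have hs := isShortExact_ker_subtype hp
  have : Module.Finite R (ModuleCat.of R (LinearMap.ker p)) :=
    Module.IsNoetherian.finite R (LinearMap.ker p)
  obtain ⟨I⟩ := nonempty_injectiveCoresolution (R := R) (A := R)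
  obtain ⟨D⟩ := SocleModel.nonempty_of_hasProjectiveDimensionLT I
    (hasProjectiveDimensionLT_ker hp (hasProjectiveDimensionLT_of_ge M c (c + 2) (by lia)))
  obtain ⟨l⟩ : Nonempty (Fin m) := by
    by_contra! h
    exact not_subsingleton M hp.subsingleton
  let r := retractPi (ModuleCat.of R R) l
  refine subsingleton_of_forall_eq 0 fun x ↦ ?_
  obtain ⟨z, hz⟩ := Abelian.Ext.covariant_sequence_exact₂ X hs.shortExact
    (x.comp (Abelian.Ext.mk₀ r.i) (add_zero n))
    (Abelian.Ext.eq_zero_of_hasInjectiveDimensionLT _ d hn)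
  calc x = (x.comp (Abelian.Ext.mk₀ r.i) (add_zero n)).comp (Abelian.Ext.mk₀ r.r) (add_zero n) := by
        rw [Abelian.Ext.comp_assoc_of_third_deg_zero, Abelian.Ext.mk₀_comp_mk₀, r.retract,
          Abelian.Ext.comp_mk₀_id]
    _ = z.comp (Abelian.Ext.mk₀ (ModuleCat.ofHom
          (LinearMap.proj l ∘ₗ (LinearMap.ker p).subtype))) (add_zero n) := by
        rw [← hz, Abelian.Ext.comp_assoc_of_third_deg_zero, Abelian.Ext.mk₀_comp_mk₀]
        rfl
    _ = 0 := D.ext_comp_eq_zero (fun v ↦ hmin v.1 v.2 l) hX z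

lemma isGorensteinRing_of_hasProjectiveDimensionLT_of_hasInjectiveDimensionLT
    (hc : HasProjectiveDimensionLT M c) (hd : HasInjectiveDimensionLT M d) :
    IsGorensteinRing R := by
  refine ⟨d, injdimLE_of_subsingleton_ext fun I n hn ↦ ?_⟩
  have : Module.Finite R (ModuleCat.of R R) := inferInstanceAs (Module.Finite R R)
  refine subsingleton_ext_quotient (N := d) (fun n hn ↦ ?_) hn.le
  refine subsingleton_ext_of_hasProjectiveDimensionLT_of_hasInjectiveDimensionLT hc hn
    fun r hr x ↦ ?_
  rw [← algebraMap_smul (IsLocalRing.ResidueField R) r x, IsLocalRing.ResidueField.algebraMap_eq,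
    (IsLocalRing.residue_eq_zero_iff r).2 hr, zero_smul]

end MinimalCover

end Foxby

lemma ReducingDim.exists_hasReducingSeq {R : Type u} [CommRing R] {P : ModuleCat.{u} R → Prop}
    {M : ModuleCat.{u} R} {r : ℕ} (h : ReducingDim R P M ≤ r) :
    ∃ s ≤ r, HasReducingSeq R P M s := by
  have hne : {n : ℕ∞ | ∃ s : ℕ, n = s ∧ HasReducingSeq R P M s}.Nonempty := by
    refine Set.nonempty_iff_ne_empty.2 fun h0 ↦ ?_
    rw [ReducingDim, h0, sInf_empty, top_le_iff] at h
    exact ENat.natCast_ne_top r h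
  obtain ⟨s, hs, hseq⟩ := csInf_mem hne
  exact ⟨s, Nat.cast_le.1 (hs.symm.trans_le h), hseq⟩

lemma HasReducingSeq.exists_hasProjectiveDimensionLT {R : Type u} [CommRing R] [IsNoetherianRing R]
    {M : ModuleCat.{u} R} [Module.Finite R M] {d r : ℕ} [HasInjectiveDimensionLT M d] (hr : r ≤ 1)
    (h : HasReducingSeq R (fun N ↦ ∃ m : ℕ, GdimLE R m N) M r) :
    ∃ c, HasProjectiveDimensionLT M c := by
  obtain ⟨K, a, b, n, rfl, hfin, hstep, m, hm⟩ := h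
  obtain rfl | rfl : r = 0 ∨ r = 1 := by lia
  · exact (IsTotallyReflexiveOrthogonal.of_hasInjectiveDimensionLT (d := d)
      inferInstance).exists_hasProjectiveDimensionLT hm
  · obtain ⟨ha, -, -, hstep⟩ := hstep 0
    have := hfin (Fin.last 1)
    exact ReducingStep.exists_hasProjectiveDimensionLT (d := d) ha hstep hm

theorem stmt3 (R : Type u) [CommRing R] [IsNoetherianRing R] [IsLocalRing R]
    (M : Type u) [AddCommGroup M] [Module R M] [Module.Finite R M] [Nontrivial M]
    (hinj : ∃ n : ℕ, InjdimLE R n (ModuleCat.of R M))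
    (hr : rGdim R (ModuleCat.of R M) ≤ 1) :
    IsGorensteinRing R := by
  obtain ⟨d, hd⟩ := hinj
  have hid := hasInjectiveDimensionLT_of_injdimLE hd
  obtain ⟨r, hr, hseq⟩ := ReducingDim.exists_hasReducingSeq (r := 1) hr
  have : Module.Finite R (ModuleCat.of R M) := inferInstanceAs (Module.Finite R M)
  have : Nontrivial (ModuleCat.of R M) := inferInstanceAs (Nontrivial M)
  obtain ⟨c, hpd⟩ := hseq.exists_hasProjectiveDimensionLT (d := d + 1) hr
  exact isGorensteinRing_of_hasProjectiveDimensionLT_of_hasInjectiveDimensionLT hpd hid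
end

section
/- Let R be a one-dimensional commutative Noetherian local ring and let M be a nonzero finitely generated R-module with finite injective dimension. If M has finite reducing Gorenstein dimension, then R is Gorenstein. -/
open CategoryTheory Pointwise

universe u

variable (R : Type u) [CommRing R]

/-!
Let `t = depth R ≤ 1`. A maximal regular sequence `x` in `R` makes `R/(x)` a module of projective
dimension `t` that contains the residue field, so descending induction and dévissage over prime
cyclic modules give `Ext^i(N, M) = 0` for every finitely generated `N` and every `i > t`.

Since `Ext^1(Ω^n K, M) = Ext^{n+1}(K, M) = 0` for `n ≥ 1`, the sequences of a reducing sequence let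
one extend a retraction `K_{i-1} → M` to `K_i`. Thus `M` is a direct summand of a module of finite
Gorenstein dimension. Moreover `Ext^1(X, M) = 0` for totally reflexive `X`, and this forces the
projective dimension of `M` to be finite.

As `t ≤ 1`, the first syzygy of `M` has depth at least `t`, so it is free by the Auslander–Buchsbaum
argument: `0 → G → F → M → 0` with `G`, `F` free and `G → F` having entries in the maximal ideal.
Now `Ext^2(N, M) = 0` makes `𝔪 Ext^2(N, F) = Ext^2(N, F)`, and Nakayama's lemma yields
`Ext^2(N, R) = 0` for every finitely generated `N`.
-/

open Abelian IsLocalRing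

section Ext

variable {R} {A B C X Y : Type u} [AddCommGroup A] [Module R A]
  [AddCommGroup B] [Module R B] [AddCommGroup C] [Module R C] [AddCommGroup X] [Module R X]
  [AddCommGroup Y] [Module R Y]

lemma extVanish_iff_forall_projectiveResolution (P : ProjectiveResolution (ModuleCat.of R X))
    (n : ℕ) : ExtVanish R X Y n ↔ ∀ f : P.complex.X n ⟶ ModuleCat.of R Y,
      P.complex.d (n + 1) n ≫ f = 0 →
        ∃ g, P.complex.d n ((ComplexShape.up ℕ).prev n) ≫ g = f := by
  let K := P.complex.linearYonedaObj R (ModuleCat.of R Y)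
  have hK : ExtVanish R X Y n ↔ Limits.IsZero (K.homology n) :=
    ModuleCat.isZero_iff_subsingleton.symm.trans
      (P.isoExt (R := R) n (ModuleCat.of R Y)).isZero_iff
  rw [hK, ← HomologicalComplex.exactAt_iff_isZero_homology,
    HomologicalComplex.exactAt_iff' _ _ n (n + 1) rfl (by simp), ShortComplex.moduleCat_exact_iff]
  rfl

lemma extVanish_iff_forall_ext_eq_zero {n : ℕ} :
    ExtVanish R X Y n ↔ ∀ e : Abelian.Ext (ModuleCat.of R X) (ModuleCat.of R Y) n, e = 0 := by
  let P := projectiveResolution (ModuleCat.of R X)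
  rw [extVanish_iff_forall_projectiveResolution P]
  cases n with
  | zero =>
    have hprev (g) : P.complex.d 0 ((ComplexShape.up ℕ).prev 0) ≫ g =
        (0 : P.complex.X 0 ⟶ ModuleCat.of R Y) := by
      rw [P.complex.shape _ _ (by simp), Limits.zero_comp]
    simp only [hprev, exists_const_iff, ← subsingleton_iff_forall_eq]
    rw [Ext.homEquiv₀.subsingleton_congr]
    refine ⟨fun h ↦ subsingleton_of_forall_eq 0 fun φ ↦ ?_, fun _ f hf ↦ ⟨⟨0⟩, ?_⟩⟩
    · refine (cancel_epi (P.π.f 0)).1 (((h (P.π.f 0 ≫ φ) ?_).2).symm.trans Limits.comp_zero.symm)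
      exact (P.complex_d_comp_π_f_zero_assoc φ).trans Limits.zero_comp
    · let φ : ModuleCat.of R X ⟶ ModuleCat.of R Y := P.exact₀.desc f hf
      rw [← P.exact₀.g_desc f hf, show P.exact₀.desc f hf = 0 from Subsingleton.elim φ 0,
        Limits.comp_zero]
  | succ n =>
    rw [show (ComplexShape.up ℕ).prev (n + 1) = n by simp]
    refine ⟨fun h e ↦ ?_, fun h f hf ↦ ?_⟩
    · obtain ⟨f, hf, rfl⟩ := P.extMk_surjective e (n + 2) rfl
      exact (P.extMk_eq_zero_iff f (n + 2) rfl hf n rfl).2 (h f hf)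
    · exact (P.extMk_eq_zero_iff f (n + 2) rfl hf n rfl).1 (h _)

namespace IsShortExact

variable {f : A →ₗ[R] B} {g : B →ₗ[R] C}

lemma comp_eq_zero (h : IsShortExact R f g) : ModuleCat.ofHom f ≫ ModuleCat.ofHom g = 0 :=
  ModuleCat.hom_ext h.2.2.linearMap_comp_eq_zero

lemma shortExact_s5 (h : IsShortExact R f g) :
    (ShortComplex.mk (ModuleCat.ofHom f) (ModuleCat.ofHom g) h.comp_eq_zero).ShortExact :=
  ModuleCat.shortComplex_shortExact _ h.2.2 h.1 h.2.1

lemma ker_subtype (hg : Function.Surjective g) : IsShortExact R (LinearMap.ker g).subtype g :=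
  ⟨Subtype.val_injective, hg, g.exact_subtype_ker_map⟩

lemma range_mkQ (hf : Function.Injective f) : IsShortExact R f (LinearMap.range f).mkQ :=
  ⟨hf, Submodule.mkQ_surjective _, f.exact_map_mkQ_range⟩

lemma extVanish_contravariant₁ (h : IsShortExact R f g) {n : ℕ} (hB : ExtVanish R B Y n)
    (hC : ExtVanish R C Y (n + 1)) : ExtVanish R A Y n := by
  rw [extVanish_iff_forall_ext_eq_zero] at *
  intro e
  obtain ⟨x, rfl⟩ := Ext.contravariant_sequence_exact₁ h.shortExact_s5 _ e (add_comm 1 n) (hC _)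
  rw [hB x, Ext.comp_zero]

lemma extVanish_contravariant₂ (h : IsShortExact R f g) {n : ℕ} (hA : ExtVanish R A Y n)
    (hC : ExtVanish R C Y n) : ExtVanish R B Y n := by
  rw [extVanish_iff_forall_ext_eq_zero] at *
  intro e
  obtain ⟨x, rfl⟩ := Ext.contravariant_sequence_exact₂ h.shortExact_s5 _ e (hA _)
  rw [hC x, Ext.comp_zero]

lemma extVanish_contravariant₃ (h : IsShortExact R f g) {n : ℕ} (hA : ExtVanish R A Y n)
    (hB : ExtVanish R B Y (n + 1)) : ExtVanish R C Y (n + 1) := by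
  rw [extVanish_iff_forall_ext_eq_zero] at *
  intro e
  obtain ⟨x, rfl⟩ := Ext.contravariant_sequence_exact₃ h.shortExact_s5 _ e (hB _) (add_comm 1 n)
  rw [hA x, Ext.comp_zero]

lemma extVanish_covariant₁ (h : IsShortExact R f g) {n : ℕ} (hC : ExtVanish R X C n)
    (hB : ExtVanish R X B (n + 1)) : ExtVanish R X A (n + 1) := by
  rw [extVanish_iff_forall_ext_eq_zero] at *
  intro e
  obtain ⟨x, rfl⟩ := Ext.covariant_sequence_exact₁ _ h.shortExact_s5 e (hB _) rfl
  rw [hC x, Ext.zero_comp]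

lemma extVanish_covariant₃ (h : IsShortExact R f g) {n : ℕ} (hB : ExtVanish R X B n)
    (hA : ExtVanish R X A (n + 1)) : ExtVanish R X C n := by
  rw [extVanish_iff_forall_ext_eq_zero] at *
  intro e
  obtain ⟨x, rfl⟩ := Ext.covariant_sequence_exact₃ _ h.shortExact_s5 e rfl (hA _)
  rw [hB x, Ext.zero_comp]

lemma exists_extension (h : IsShortExact R f g) (hC : ExtVanish R C Y 1) (φ : A →ₗ[R] Y) :
    ∃ ψ : B →ₗ[R] Y, ψ ∘ₗ f = φ := by
  obtain ⟨x, hx⟩ := Ext.contravariant_sequence_exact₁ h.shortExact_s5 _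
    (Ext.mk₀ (ModuleCat.ofHom φ)) (add_comm 1 0) (extVanish_iff_forall_ext_eq_zero.1 hC _)
  obtain ⟨ψ, rfl⟩ := Ext.homEquiv₀.symm.surjective x
  rw [Ext.homEquiv₀_symm_apply, Ext.mk₀_comp_mk₀] at hx
  exact ⟨ψ.hom, congrArg ModuleCat.Hom.hom (Ext.homEquiv₀.symm.injective hx)⟩

lemma exists_lift (h : IsShortExact R f g) (hA : ExtVanish R X A 1) (φ : X →ₗ[R] C) :
    ∃ ψ : X →ₗ[R] B, g ∘ₗ ψ = φ := by
  obtain ⟨x, hx⟩ := Ext.covariant_sequence_exact₃ _ h.shortExact_s5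
    (Ext.mk₀ (ModuleCat.ofHom φ)) (zero_add 1) (extVanish_iff_forall_ext_eq_zero.1 hA _)
  obtain ⟨ψ, rfl⟩ := Ext.homEquiv₀.symm.surjective x
  rw [Ext.homEquiv₀_symm_apply, Ext.mk₀_comp_mk₀] at hx
  exact ⟨ψ.hom, congrArg ModuleCat.Hom.hom (Ext.homEquiv₀.symm.injective hx)⟩

lemma extVanish_one_of_exists_extension (h : IsShortExact R f g) (hB : ExtVanish R B Y 1)
    (hext : ∀ φ : A →ₗ[R] Y, ∃ ψ : B →ₗ[R] Y, ψ ∘ₗ f = φ) : ExtVanish R C Y 1 := by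
  rw [extVanish_iff_forall_ext_eq_zero] at *
  intro e
  obtain ⟨x, rfl⟩ := Ext.contravariant_sequence_exact₃ h.shortExact_s5 _ e (hB _) (add_comm 1 0)
  obtain ⟨φ, rfl⟩ := Ext.homEquiv₀.symm.surjective x
  obtain ⟨ψ, hψ⟩ := hext φ.hom
  have hφ : φ = ModuleCat.ofHom f ≫ ModuleCat.ofHom ψ := ModuleCat.hom_ext hψ.symm
  rw [Ext.homEquiv₀_symm_apply, hφ, ← Ext.mk₀_comp_mk₀, h.shortExact_s5.extClass_comp_assoc]

end IsShortExact

lemma extVanish_succ_of_projective [Module.Projective R X] (n : ℕ) :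
    ExtVanish R X Y (n + 1) := by
  have : Projective (ModuleCat.of R X) := (IsProjective.iff_projective X).1 inferInstance
  exact extVanish_iff_forall_ext_eq_zero.2 fun e ↦ Ext.eq_zero_of_projective e

lemma extVanish_succ_of_injective [Module.Injective R Y] (n : ℕ) : ExtVanish R X Y (n + 1) := by
  have : Injective (ModuleCat.of R Y) := Module.injective_object_of_injective_module R Y
  exact extVanish_iff_forall_ext_eq_zero.2 fun e ↦ Ext.eq_zero_of_injective e

variable (R Y) in
lemma id_pi_eq_sum (ι : Type) [Fintype ι] [DecidableEq ι] :
    𝟙 (ModuleCat.of R (ι → Y)) = ∑ i, ModuleCat.ofHom (LinearMap.proj i) ≫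
      ModuleCat.ofHom (LinearMap.single R (fun _ : ι ↦ Y) i) := by
  ext y i
  simp [ModuleCat.hom_sum]

namespace ExtVanish

variable {n : ℕ}

lemma of_linearEquiv (h : ExtVanish R A Y n) (e : A ≃ₗ[R] B) : ExtVanish R B Y n := by
  rw [extVanish_iff_forall_ext_eq_zero] at *
  intro c
  rw [← c.mk₀_id_comp, ← e.toModuleIso.inv_hom_id, ← Ext.mk₀_comp_mk₀_assoc, h (Ext.comp _ _ _),
    Ext.comp_zero]

lemma of_comp_eq_id_right (h : ExtVanish R X B n) {i : A →ₗ[R] B} {r : B →ₗ[R] A}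
    (hri : r ∘ₗ i = LinearMap.id) : ExtVanish R X A n := by
  rw [extVanish_iff_forall_ext_eq_zero] at *
  intro e
  have hid : ModuleCat.ofHom i ≫ ModuleCat.ofHom r = 𝟙 (ModuleCat.of R A) :=
    ModuleCat.hom_ext hri
  rw [← e.comp_mk₀_id, ← hid, ← Ext.mk₀_comp_mk₀, ← Ext.comp_assoc_of_third_deg_zero,
    h (Ext.comp _ _ _), Ext.zero_comp]

lemma pi_right {ι : Type} [Finite ι] (h : ExtVanish R X Y n) : ExtVanish R X (ι → Y) n := by
  classical
  have := Fintype.ofFinite ι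
  rw [extVanish_iff_forall_ext_eq_zero] at *
  intro e
  rw [← e.comp_mk₀_id, id_pi_eq_sum, Ext.mk₀_sum, Ext.comp_sum]
  refine Finset.sum_eq_zero fun i _ ↦ ?_
  rw [← Ext.mk₀_comp_mk₀, ← Ext.comp_assoc_of_third_deg_zero, h (Ext.comp _ _ _), Ext.zero_comp]

lemma pi_left {ι : Type} [Finite ι] (h : ExtVanish R X Y n) : ExtVanish R (ι → X) Y n := by
  classical
  have := Fintype.ofFinite ι
  rw [extVanish_iff_forall_ext_eq_zero] at *
  intro e
  rw [← e.mk₀_id_comp, id_pi_eq_sum, Ext.mk₀_sum, Ext.sum_comp]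
  refine Finset.sum_eq_zero fun i _ ↦ ?_
  rw [← Ext.mk₀_comp_mk₀_assoc, h (Ext.comp _ _ _), Ext.comp_zero]

end ExtVanish

end Ext

section Depth

variable {R} [IsLocalRing R] {A B C M : Type u} [AddCommGroup A] [Module R A]
  [AddCommGroup B] [Module R B] [AddCommGroup C] [Module R C] [AddCommGroup M] [Module R M]

lemma natCast_le_depth_iff {n : ℕ} :
    n ≤ depth R (ModuleCat.of R M) ↔ ∀ i < n, ExtVanish R (R ⧸ maximalIdeal R) M i := by
  simp only [depth, le_sInf_iff]
  refine ⟨fun h i hi ↦ ?_, ?_⟩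
  · by_contra hv
    exact hi.not_ge (ENat.natCast_le_natCast.1 (h i ⟨i, rfl, hv⟩))
  · rintro h _ ⟨i, rfl, hv⟩
    exact ENat.natCast_le_natCast.2 (not_lt.1 fun hi ↦ hv (h i hi))

lemma not_extVanish_of_depth_eq {t : ℕ} (h : depth R (ModuleCat.of R M) = t) :
    ¬ ExtVanish R (R ⧸ maximalIdeal R) M t := fun hv ↦ by
  have hlt : ((t + 1 : ℕ) : ℕ∞) ≤ depth R (ModuleCat.of R M) :=
    natCast_le_depth_iff.2 fun i hi ↦ (Nat.lt_succ_iff_lt_or_eq.1 hi).elim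
      (natCast_le_depth_iff.1 h.ge i) (· ▸ hv)
  exact t.lt_succ_self.not_ge (ENat.natCast_le_natCast.1 (h ▸ hlt))

lemma IsShortExact.le_depth₁ {f : A →ₗ[R] B} {g : B →ₗ[R] C} (h : IsShortExact R f g) {n : ℕ}
    (hB : n ≤ depth R (ModuleCat.of R B)) (hC : n ≤ depth R (ModuleCat.of R C) + 1) :
    n ≤ depth R (ModuleCat.of R A) := by
  rw [natCast_le_depth_iff] at hB ⊢
  rintro (_ | i) hi
  · have := (ModuleCat.mono_iff_injective (ModuleCat.ofHom f)).2 h.1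
    have hBsub := subsingleton_of_forall_eq 0 (extVanish_iff_forall_ext_eq_zero.1 (hB 0 hi))
    exact extVanish_iff_forall_ext_eq_zero.2 ((subsingleton_iff_forall_eq 0).1
      (Ext.postcomp_mk₀_injective_of_mono _ (ModuleCat.ofHom f)).subsingleton)
  · refine h.extVanish_covariant₁ (natCast_le_depth_iff.1 ?_ i i.lt_succ_self) (hB _ hi)
    exact (ENat.add_le_add_iff_right ENat.one_ne_top).1
      ((by exact_mod_cast hi : ((i + 1 : ℕ) + 1 : ℕ∞) ≤ n).trans hC)

lemma exists_injective_of_depth_eq_zero (h : depth R (ModuleCat.of R M) = 0) :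
    ∃ f : (R ⧸ maximalIdeal R) →ₗ[R] M, Function.Injective f := by
  have : IsSimpleModule R (R ⧸ maximalIdeal R) :=
    isSimpleModule_iff_isCoatom.2 (maximalIdeal.isMaximal R).out
  by_contra! hf
  refine not_extVanish_of_depth_eq (t := 0) h (extVanish_iff_forall_ext_eq_zero.2 fun e ↦ ?_)
  obtain ⟨φ, rfl⟩ := Ext.homEquiv₀.symm.surjective e
  rw [Ext.homEquiv₀_symm_apply, show φ = 0 from
    ModuleCat.hom_ext (φ.hom.injective_or_eq_zero.resolve_left (hf _)), Ext.mk₀_zero]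

variable [IsNoetherianRing R]

lemma natCast_le_depth_iff_exists_isRegular [Module.Finite R M] [Nontrivial M] {n : ℕ} :
    n ≤ depth R (ModuleCat.of R M) ↔ ∃ rs : List R, rs.length = n ∧
      (∀ r ∈ rs, r ∈ maximalIdeal R) ∧ RingTheory.Sequence.IsRegular M rs := by
  have hsupp : Module.support R (ModuleCat.of R (R ⧸ maximalIdeal R)) =
      PrimeSpectrum.zeroLocus (maximalIdeal R) := by
    rw [Module.support_eq_zeroLocus, Ideal.annihilator_quotient]
  have hlt : maximalIdeal R • (⊤ : Submodule R (ModuleCat.of R M)) < ⊤ :=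
    (Submodule.top_ne_ideal_smul_of_le_jacobson_annihilator
      (maximalIdeal_le_jacobson _)).symm.lt_top
  simp only [natCast_le_depth_iff, extVanish_iff_forall_ext_eq_zero,
    ← subsingleton_iff_forall_eq]
  refine ⟨ModuleCat.exists_isRegular_of_exists_subsingleton_ext _ n _ hlt _ hsupp, ?_⟩
  rintro ⟨rs, rfl, hmem, hrs⟩
  exact ModuleCat.subsingleton_ext_of_exists_isRegular _ _ hsupp.le _ hlt rs hmem hrs

variable (R) in
lemma depth_le_ringKrullDim : (depth R (ModuleCat.of R R) : WithBot ℕ∞) ≤ ringKrullDim R := by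
  have key {n : ℕ} (hn : n ≤ depth R (ModuleCat.of R R)) : (n : WithBot ℕ∞) ≤ ringKrullDim R := by
    obtain ⟨rs, rfl, -, hrs⟩ := natCast_le_depth_iff_exists_isRegular.1 hn
    rw [← ringKrullDim_add_length_eq_ringKrullDim_of_isRegular rs hrs]
    have : Nontrivial (R ⧸ Ideal.ofList rs) :=
      Ideal.Quotient.nontrivial_iff.2 (by simpa using hrs.top_ne_smul.symm)
    exact le_add_of_nonneg_left ringKrullDim_nonneg_of_nontrivial
  have h0 : 0 ≤ ringKrullDim R := ringKrullDim_nonneg_of_nontrivial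
  obtain ⟨d, hd⟩ := WithBot.ne_bot_iff_exists.1 (h0.trans_lt' (WithBot.bot_lt_coe 0)).ne'
  rw [← hd]
  refine WithBot.coe_le_coe.2 (ENat.forall_natCast_le_iff_le.1 fun n hn ↦ ?_)
  exact WithBot.coe_le_coe.1 ((key hn).trans hd.ge)

lemma exists_injective_hasProjectiveDimensionLE {t : ℕ} (ht : depth R (ModuleCat.of R R) = t) :
    ∃ (Q : ModuleCat.{u} R) (f : (R ⧸ maximalIdeal R) →ₗ[R] Q), Module.Finite R Q ∧
      HasProjectiveDimensionLE Q t ∧ Function.Injective f := by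
  obtain ⟨rs, rfl, hmem, hrs⟩ := natCast_le_depth_iff_exists_isRegular.1 ht.ge
  let Q := ModuleCat.of R (R ⧸ (Ideal.ofList rs • ⊤ : Submodule R R))
  have : Nontrivial Q := Submodule.Quotient.nontrivial_iff.2 hrs.top_ne_smul.symm
  have hpd : projectiveDimension Q = projectiveDimension (ModuleCat.of R R) + rs.length :=
    ModuleCat.projectiveDimension_quotient_eq_add_length_of_isWeaklyRegular
      (ModuleCat.of R R) rs hrs.1 hmem
  have hdepth : depth R Q = 0 := by
    by_contra h0
    obtain ⟨xs, hxs, hxmem, hx⟩ := (natCast_le_depth_iff_exists_isRegular (M := Q) (n := 1)).1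
      (Order.one_le_iff_ne_zero.2 h0)
    have hmem' : ∀ r ∈ rs ++ xs, r ∈ maximalIdeal R :=
      fun r hr ↦ (List.mem_append.1 hr).elim (hmem r) (hxmem r)
    have happ : RingTheory.Sequence.IsRegular R (rs ++ xs) :=
      (isRegular_iff_isWeaklyRegular_of_subset_maximalIdeal hmem').2
        ((RingTheory.Sequence.isWeaklyRegular_append_iff R rs xs).2 ⟨hrs.1, hx.1⟩)
    have hle := natCast_le_depth_iff_exists_isRegular.2 ⟨rs ++ xs, rfl, hmem', happ⟩
    rw [ht, ENat.natCast_le_natCast, List.length_append, hxs] at hle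
    exact (rs.length).lt_succ_self.not_ge hle
  obtain ⟨f, hf⟩ := exists_injective_of_depth_eq_zero hdepth
  refine ⟨Q, f, inferInstance, ?_, hf⟩
  have := ModuleCat.projective_of_module_projective (ModuleCat.of R R)
  rw [← projectiveDimension_le_iff, hpd]
  refine add_le_of_nonpos_left ?_
  exact_mod_cast (projectiveDimension_le_iff (ModuleCat.of R R) 0).2 inferInstance

end Depth

section InjectiveDimension

variable {R}

lemma InjdimLE.extVanish {n : ℕ} {M : ModuleCat.{u} R} (h : InjdimLE R n M) {i : ℕ} (hi : n < i)
    (X : Type u) [AddCommGroup X] [Module R X] : ExtVanish R X M i := by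
  obtain ⟨i, rfl⟩ := Nat.exists_eq_add_of_lt hi
  clear hi
  induction n generalizing M with
  | zero =>
    have : Module.Injective R M := h
    exact extVanish_succ_of_injective _
  | succ n ih =>
    obtain ⟨I, C, f, g, hI, hfg, hC⟩ := h
    rw [Nat.add_right_comm n 1 i]
    exact hfg.extVanish_covariant₁ (ih hC) (extVanish_succ_of_injective _)

lemma injective_of_forall_extVanish_one {M : Type u} [AddCommGroup M] [Module R M]
    (h : ∀ (N : Type u) [AddCommGroup N] [Module R N] [Module.Finite R N], ExtVanish R N M 1) :
    Module.Injective R M :=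
  Module.Baer.injective fun J φ ↦
    have ⟨ψ, hψ⟩ := (IsShortExact.range_mkQ J.injective_subtype).exists_extension (h _) φ
    ⟨ψ, fun x hx ↦ LinearMap.congr_fun hψ ⟨x, hx⟩⟩

lemma injdimLE_of_forall_extVanish {n : ℕ} {M : ModuleCat.{u} R}
    (h : ∀ (N : Type u) [AddCommGroup N] [Module R N] [Module.Finite R N],
      ExtVanish R N M (n + 1)) : InjdimLE R n M := by
  induction n generalizing M with
  | zero => exact injective_of_forall_extVanish_one h
  | succ n ih =>
    obtain ⟨I, hI, f, hf⟩ := EnoughInjectives.presentation M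
    have hI' : Module.Injective R I := Module.injective_module_of_injective_object R I
    have hfg := IsShortExact.range_mkQ ((ModuleCat.mono_iff_injective f).1 hf)
    exact ⟨I, ModuleCat.of R _, f.hom, _, hI', hfg, ih fun N _ _ _ ↦
      hfg.extVanish_covariant₃ (extVanish_succ_of_injective n) (h N)⟩

variable [IsLocalRing R] [IsNoetherianRing R] {M : Type u} [AddCommGroup M] [Module R M]
  [Module.Finite R M]

lemma extVanish_of_top_le_smul {X : Type u} [AddCommGroup X] [Module R X] [Module.Finite R X]
    {n : ℕ} (h : (⊤ : Submodule R (Abelian.Ext (ModuleCat.of R X) (ModuleCat.of R M) n)) ≤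
      maximalIdeal R • ⊤) : ExtVanish R X M n := by
  have : Module.Finite R (ModuleCat.of R X) := ‹_›
  have : Module.Finite R (ModuleCat.of R M) := ‹_›
  have htop := Submodule.eq_bot_of_le_smul_of_le_jacobson_bot _ _ Module.Finite.fg_top h
    (maximalIdeal_le_jacobson _)
  exact extVanish_iff_forall_ext_eq_zero.2 fun e ↦
    (Submodule.mem_bot R).1 (htop ▸ Submodule.mem_top)

lemma extVanish_of_isSMulRegular {X : Type u} [AddCommGroup X] [Module R X] [Module.Finite R X]
    {x : R} (hx : x ∈ maximalIdeal R) (hreg : IsSMulRegular X x) {n : ℕ}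
    (h : ∀ (N : Type u) [AddCommGroup N] [Module R N] [Module.Finite R N],
      ExtVanish R N M (n + 1)) : ExtVanish R X M n := by
  refine extVanish_of_top_le_smul fun e _ ↦ ?_
  have hinj : Function.Injective (x • LinearMap.id : X →ₗ[R] X) := hreg
  have hs := IsShortExact.range_mkQ hinj
  obtain ⟨y, rfl⟩ := Ext.contravariant_sequence_exact₁ hs.shortExact_s5 _ e (add_comm 1 n)
    (extVanish_iff_forall_ext_eq_zero.1 (h _) _)
  change (Ext.mk₀ (x • 𝟙 (ModuleCat.of R X))).comp y _ ∈ _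
  rw [Ext.mk₀_smul, Ext.smul_comp, Ext.mk₀_id_comp]
  exact Submodule.smul_mem_smul hx Submodule.mem_top

lemma extVanish_of_residueField {n : ℕ} (hk : ExtVanish R (R ⧸ maximalIdeal R) M n)
    (h : ∀ (N : Type u) [AddCommGroup N] [Module R N] [Module.Finite R N],
      ExtVanish R N M (n + 1)) (N : Type u) [AddCommGroup N] [Module R N] [hN : Module.Finite R N] :
    ExtVanish R N M n := by
  induction hN using IsNoetherianRing.induction_on_isQuotientEquivQuotientPrime R with
  | subsingleton N =>
    refine extVanish_iff_forall_ext_eq_zero.2 fun e ↦ ?_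
    rw [← e.mk₀_id_comp, (ModuleCat.isZero_of_subsingleton (ModuleCat.of R N)).eq_of_src (𝟙 _) 0,
      Ext.mk₀_zero, Ext.zero_comp]
  | quotient N p e =>
    refine ExtVanish.of_linearEquiv ?_ e.symm
    by_cases hp : maximalIdeal R ≤ p.1
    · rwa [← (maximalIdeal.isMaximal R).eq_of_le p.2.ne_top hp]
    · obtain ⟨x, hx, hxp⟩ := SetLike.not_le_iff_exists.1 hp
      have hreg : IsSMulRegular (R ⧸ p.1) x := fun _ _ ↦
        mul_left_cancel₀ (Ideal.Quotient.eq_zero_iff_mem.not.2 hxp)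
      exact extVanish_of_isSMulRegular hx hreg h
  | exact N₁ N₂ N₃ f g hf hg hfg h₁ h₃ =>
    exact IsShortExact.extVanish_contravariant₂ ⟨hf, hg, hfg⟩ h₁ h₃

lemma extVanish_of_depth_lt {t : ℕ} (ht : depth R (ModuleCat.of R R) = t)
    (hM : ∃ n, InjdimLE R n (ModuleCat.of R M)) {i : ℕ} (hi : t < i)
    (N : Type u) [AddCommGroup N] [Module R N] [Module.Finite R N] : ExtVanish R N M i := by
  obtain ⟨n, hn⟩ := hM
  obtain ⟨Q, f, hQ, hpd, hf⟩ := exists_injective_hasProjectiveDimensionLE ht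
  obtain ⟨d, hd⟩ : ∃ d, n < i + d := ⟨n + 1, by omega⟩
  induction d generalizing i N with
  | zero => exact hn.extVanish hd N
  | succ d ih =>
    have h (N : Type u) [AddCommGroup N] [Module R N] [Module.Finite R N] :
        ExtVanish R N M (i + 1) := ih (by omega) N (by omega)
    have hQi : ExtVanish R Q M i := extVanish_iff_forall_ext_eq_zero.2 fun e ↦
      e.eq_zero_of_hasProjectiveDimensionLT (t + 1) hi
    exact extVanish_of_residueField
      ((IsShortExact.range_mkQ hf).extVanish_contravariant₁ hQi (h _)) h N

end InjectiveDimension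

section Retract

variable {R}

lemma IsSyzygy.extVanish {n : ℕ} {S K : ModuleCat.{u} R} (h : IsSyzygy R n S K) {Y : Type u}
    [AddCommGroup Y] [Module R Y] {i : ℕ} (hK : ExtVanish R K Y (i + 1 + n)) :
    ExtVanish R S Y (i + 1) := by
  induction n generalizing K with
  | zero =>
    obtain ⟨e⟩ := h
    exact hK.of_linearEquiv e.symm
  | succ n ih =>
    obtain ⟨W, F, f, g, _, _, hfg, hS⟩ := h
    refine ih hS (hfg.extVanish_contravariant₁ ?_ hK)
    rw [add_right_comm]
    exact extVanish_succ_of_projective _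

variable {M : Type u} [AddCommGroup M] [Module R M]

lemma ReducingStep.exists_retraction {K L : ModuleCat.{u} R} {a b n : ℕ} (ha : 1 ≤ a)
    (h : ReducingStep R K L a b n) (hK : ExtVanish R K M (n + 1))
    (hret : ∃ (ι : M →ₗ[R] K) (π : K →ₗ[R] M), π ∘ₗ ι = LinearMap.id) :
    ∃ (ι : M →ₗ[R] L) (π : L →ₗ[R] M), π ∘ₗ ι = LinearMap.id := by
  obtain ⟨W, f, g, hW, hfg⟩ := h
  obtain ⟨ι, π, hι⟩ := hret
  have hW₁ : ExtVanish R W M 1 := hW.extVanish (i := 0) (by rwa [zero_add, add_comm])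
  obtain ⟨ψ, hψ⟩ := hfg.exists_extension hW₁.pi_left (π ∘ₗ LinearMap.proj ⟨0, ha⟩)
  refine ⟨f ∘ₗ LinearMap.single R (fun _ ↦ K) ⟨0, ha⟩ ∘ₗ ι, ψ, ?_⟩
  rw [← LinearMap.comp_assoc, hψ]
  ext m
  simpa using LinearMap.congr_fun hι m

lemma HasReducingSeq.exists_retraction {P : ModuleCat.{u} R → Prop} {r : ℕ}
    (h : HasReducingSeq R P (ModuleCat.of R M) r)
    (hM : ∀ (N : Type u) [AddCommGroup N] [Module R N] [Module.Finite R N] (i : ℕ), 1 < i →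
      ExtVanish R N M i) :
    ∃ (L : ModuleCat.{u} R) (ι : M →ₗ[R] L) (π : L →ₗ[R] M), P L ∧ π ∘ₗ ι = LinearMap.id := by
  obtain ⟨K, a, b, n, hK₀, hfin, hstep, hP⟩ := h
  have hret (i) : ∃ (ι : M →ₗ[R] K i) (π : K i →ₗ[R] M), π ∘ₗ ι = LinearMap.id := by
    induction i using Fin.induction with
    | zero =>
      rw [hK₀]
      exact ⟨LinearMap.id, LinearMap.id, rfl⟩
    | succ i ih =>
      obtain ⟨ha, -, hn, hred⟩ := hstep i
      have := hfin i.castSucc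
      exact hred.exists_retraction ha (hM _ _ (Nat.lt_succ_of_le hn)) ih
  obtain ⟨ι, π, hι⟩ := hret (Fin.last r)
  exact ⟨_, ι, π, hP, hι⟩

end Retract

section TotallyReflexive

variable {R} {A B C X : Type u} [AddCommGroup A] [Module R A]
  [AddCommGroup B] [Module R B] [AddCommGroup C] [Module R C] [AddCommGroup X] [Module R X]

namespace IsShortExact

variable {f : A →ₗ[R] B} {g : B →ₗ[R] C}

lemma dualMap (h : IsShortExact R f g) (hC : ExtVanish R C R 1) :
    IsShortExact R g.dualMap f.dualMap :=
  ⟨LinearMap.dualMap_injective_of_surjective h.2.1, h.exists_extension hC,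
    LinearMap.exact_lcomp_of_exact_of_surjective R h.2.2 h.2.1⟩

lemma extVanish_dual_of_projective [Module.Projective R (Module.Dual R B)]
    (h : IsShortExact R f g) (hC : IsTotallyReflexive R C) {i : ℕ} (hi : 1 ≤ i) :
    ExtVanish R (Module.Dual R A) R i := by
  have hdual := h.dualMap (hC.2.2.1 1 le_rfl)
  obtain ⟨i, rfl⟩ := Nat.exists_eq_add_of_le' hi
  cases i with
  | zero =>
    refine hdual.extVanish_one_of_exists_extension (extVanish_succ_of_projective 0) fun φ ↦ ?_
    obtain ⟨c, rfl⟩ := hC.2.1.2 φ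
    obtain ⟨b, rfl⟩ := h.2.1 c
    exact ⟨Module.Dual.eval R B b, rfl⟩
  | succ i =>
    exact hdual.extVanish_contravariant₃ (hC.2.2.2 _ i.succ_pos) (extVanish_succ_of_projective _)

end IsShortExact

namespace IsTotallyReflexive

lemma extVanish_pi (h : IsTotallyReflexive R X) (m : ℕ) {i : ℕ} (hi : 1 ≤ i) :
    ExtVanish R X (Fin m → R) i :=
  (h.2.2.1 i hi).pi_right

variable [IsNoetherianRing R]

lemma dual_s5 (h : IsTotallyReflexive R X) : IsTotallyReflexive R (Module.Dual R X) := by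
  obtain ⟨_, hrefl, hX, hdual⟩ := h
  have : Module.IsReflexive R X := ⟨hrefl⟩
  obtain ⟨m, p, hp⟩ := Module.Finite.exists_fin' R X
  exact ⟨.of_injective p.dualMap (LinearMap.dualMap_injective_of_surjective hp),
    Module.bijective_dual_eval R _, hdual,
    fun i hi ↦ (hX i hi).of_linearEquiv (Module.evalEquiv R X)⟩

lemma of_isShortExact_s5 {f : A →ₗ[R] B} {g : B →ₗ[R] C} [Module.Free R B] [Module.Finite R B]
    (h : IsShortExact R f g) (hC : IsTotallyReflexive R C) : IsTotallyReflexive R A := by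
  have hdual := h.dualMap (hC.2.2.1 1 le_rfl)
  have hA : ∀ i : ℕ, 1 ≤ i → ExtVanish R (Module.Dual R A) R i := fun i hi ↦
    h.extVanish_dual_of_projective hC hi
  have hdouble := hdual.dualMap (hA 1 le_rfl)
  refine ⟨.of_injective f h.1, ?_, fun i hi ↦ ?_, hA⟩
  · exact LinearMap.bijective_of_bijective_of_injective_of_left_exact f g f.dualMap.dualMap
      g.dualMap.dualMap _ (Module.Dual.eval R B) (Module.Dual.eval R C) rfl rfl h.2.2 hdouble.2.2
      (Module.bijective_dual_eval R B) hC.2.1.1 h.1 hdouble.1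
  · obtain ⟨i, rfl⟩ := Nat.exists_eq_add_of_le' hi
    exact h.extVanish_contravariant₁ (extVanish_succ_of_projective i) (hC.2.2.1 _ (by omega))

lemma exists_isShortExact (h : IsTotallyReflexive R X) :
    ∃ (F C : ModuleCat.{u} R) (f : X →ₗ[R] F) (g : F →ₗ[R] C), Module.Free R F ∧
      Module.Finite R F ∧ IsTotallyReflexive R C ∧ IsShortExact R f g := by
  have := h.dual_s5.1
  have : Module.IsReflexive R X := ⟨h.2.1⟩
  obtain ⟨m, p, hp⟩ := Module.Finite.exists_fin' R (Module.Dual R X)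
  have hker := IsShortExact.ker_subtype hp
  have hdual := hker.dualMap (h.2.2.2 1 le_rfl)
  have hC := (of_isShortExact_s5 hker h.dual_s5).dual_s5
  refine ⟨.of R (Module.Dual R (Fin m → R)), .of R _, p.dualMap ∘ₗ (Module.evalEquiv R X), _,
    inferInstanceAs (Module.Free R (Module.Dual R (Fin m → R))),
    inferInstanceAs (Module.Finite R (Module.Dual R (Fin m → R))), hC,
    hdual.1.comp (Module.evalEquiv R X).injective, hdual.2.1, ?_⟩
  exact (Module.evalEquiv R X).surjective.comp_exact_iff_exact.2 hdual.2.2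

end IsTotallyReflexive

variable [IsNoetherianRing R]

lemma IsTotallyReflexive.extVanish_one (hX : IsTotallyReflexive R X) {N : Type u}
    [AddCommGroup N] [Module R N] (hN : ∀ (Y : Type u) [AddCommGroup Y] [Module R Y]
      [Module.Finite R Y], ExtVanish R Y N 2) : ExtVanish R X N 1 := by
  obtain ⟨F, C, f, g, _, _, hC, hfg⟩ := hX.exists_isShortExact
  have := hC.1
  exact hfg.extVanish_contravariant₁ (extVanish_succ_of_projective 0) (hN C)

lemma IsShortExact.extVanish_one_of_isTotallyReflexive {N N' : Type u} [AddCommGroup N]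
    [Module R N] [AddCommGroup N'] [Module R N'] {m : ℕ} {j : N' →ₗ[R] (Fin m → R)}
    {p : (Fin m → R) →ₗ[R] N} (h : IsShortExact R j p)
    (hN : ∀ (Y : Type u) [AddCommGroup Y] [Module R Y], IsTotallyReflexive R Y →
      ExtVanish R Y N 1) (hX : IsTotallyReflexive R X) : ExtVanish R X N' 1 := by
  obtain ⟨F, C, f, g, _, _, hC, hfg⟩ := hX.exists_isShortExact
  exact hfg.extVanish_contravariant₁ (extVanish_succ_of_projective 0)
    (h.extVanish_covariant₁ (hN C hC) (hC.extVanish_pi m one_le_two))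

/- On the `m`-th syzygies a lift of `φ` to resolutions starts at a totally reflexive module, which
embeds in a free module with totally reflexive cokernel; so the lift factors through that free
module. The hypothesis on `N` is what makes the lifts exist, and it passes to syzygies. -/
lemma GdimLE.mk₀_comp_eq_zero {m : ℕ} {L : ModuleCat.{u} R} (hL : GdimLE R m L)
    {N : Type u} [AddCommGroup N] [Module R N] [Module.Finite R N]
    (hN : ∀ (X : Type u) [AddCommGroup X] [Module R X], IsTotallyReflexive R X →
      ExtVanish R X N 1)
    (φ : L ⟶ ModuleCat.of R N) {T : ModuleCat.{u} R}
    (e : Abelian.Ext (ModuleCat.of R N) T (m + 1)) :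
    (Ext.mk₀ φ).comp e (zero_add _) = 0 := by
  induction m generalizing L N with
  | zero =>
    obtain ⟨F, C, f, g, _, _, hC, hfg⟩ := IsTotallyReflexive.exists_isShortExact hL
    obtain ⟨ψ, hψ⟩ := hfg.exists_extension (hN C hC) φ.hom
    have hφ : φ = ModuleCat.ofHom f ≫ ModuleCat.ofHom ψ := ModuleCat.hom_ext hψ.symm
    have hF : ExtVanish R F T 1 := extVanish_succ_of_projective 0
    rw [hφ, ← Ext.mk₀_comp_mk₀_assoc, extVanish_iff_forall_ext_eq_zero.1 hF (Ext.comp _ _ _),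
      Ext.comp_zero]
  | succ m ih =>
    obtain ⟨X, K, f, g, hX, hfg, hK⟩ := hL
    obtain ⟨l, p, hp⟩ := Module.Finite.exists_fin' R N
    have hker := IsShortExact.ker_subtype hp
    have hN' (Y : Type u) [AddCommGroup Y] [Module R Y] (hY : IsTotallyReflexive R Y) :
        ExtVanish R Y (LinearMap.ker p) 1 := hker.extVanish_one_of_isTotallyReflexive hN hY
    obtain ⟨a, ha⟩ := hker.exists_lift (hN' X hX) (φ.hom ∘ₗ g)
    have hmem (x : K) : a (f x) ∈ LinearMap.ker p := by
      have hgf : g (f x) = 0 := hfg.2.2.apply_apply_eq_zero x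
      simpa [hgf] using LinearMap.congr_fun ha (f x)
    let b : K →ₗ[R] LinearMap.ker p := (a ∘ₗ f).codRestrict _ hmem
    have hnat := ShortComplex.ShortExact.extClass_naturality hfg.shortExact_s5 hker.shortExact_s5
      { τ₁ := ModuleCat.ofHom b, τ₂ := ModuleCat.ofHom a, τ₃ := φ
        comm₁₂ := rfl
        comm₂₃ := ModuleCat.hom_ext ha }
    have hfree : ExtVanish R (Fin l → R) T (m + 1 + 1) := extVanish_succ_of_projective _
    obtain ⟨x, rfl⟩ := Ext.contravariant_sequence_exact₃ hker.shortExact_s5 T e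
      (extVanish_iff_forall_ext_eq_zero.1 hfree _) (add_comm 1 (m + 1))
    rw [← Ext.comp_assoc (a₁₂ := 1) _ _ _ (by omega) (by omega) (by omega), ← hnat,
      Ext.comp_assoc (a₂₃ := m + 1) _ _ _ (by omega) (by omega) (by omega), ih hK hN',
      Ext.comp_zero]

lemma GdimLE.hasProjectiveDimensionLE_of_retract {m : ℕ} {L : ModuleCat.{u} R}
    (hL : GdimLE R m L) {N : Type u} [AddCommGroup N] [Module R N] [Module.Finite R N]
    (hN : ∀ (X : Type u) [AddCommGroup X] [Module R X], IsTotallyReflexive R X →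
      ExtVanish R X N 1)
    {ι : N →ₗ[R] L} {π : L →ₗ[R] N} (hπι : π ∘ₗ ι = LinearMap.id) :
    HasProjectiveDimensionLE (ModuleCat.of R N) m := by
  have : Module.Finite R (ModuleCat.of R N) := ‹_›
  refine ModuleCat.hasProjectiveDimensionLT_of_forall_finite _ _ fun T _ ↦
    subsingleton_of_forall_eq 0 fun e ↦ ?_
  have hid : ModuleCat.ofHom ι ≫ ModuleCat.ofHom π = 𝟙 (ModuleCat.of R N) :=
    ModuleCat.hom_ext hπι
  rw [← e.mk₀_id_comp, ← hid, ← Ext.mk₀_comp_mk₀_assoc, hL.mk₀_comp_eq_zero hN, Ext.comp_zero]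

end TotallyReflexive

section ProjectiveDimension

variable {R}

lemma linearMap_mem_smul_top_of_range_le {F G : Type u} [AddCommGroup F] [Module R F]
    [AddCommGroup G] [Module R G] [Module.Free R G] [Module.Finite R G] {I : Ideal R}
    {φ : G →ₗ[R] F} (h : LinearMap.range φ ≤ I • ⊤) : φ ∈ I • (⊤ : Submodule R (G →ₗ[R] F)) := by
  let b := Module.Free.chooseBasis R G
  have hφ : φ = ∑ k, LinearMap.smulRightₗ (b.coord k) (φ (b k)) := by
    refine b.ext fun l ↦ ?_
    simp [Finsupp.single_apply]
  rw [hφ]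
  refine Submodule.sum_mem _ fun k _ ↦ ?_
  have hk : LinearMap.smulRightₗ (b.coord k) (φ (b k)) ∈
      (I • (⊤ : Submodule R F)).map (LinearMap.smulRightₗ (b.coord k)) :=
    Submodule.mem_map_of_mem (h ⟨b k, rfl⟩)
  rw [Submodule.map_smul''] at hk
  exact Submodule.smul_mono le_rfl le_top hk

lemma ext_comp_mk₀_mem_smul_top {X G F : ModuleCat.{u} R} {n : ℕ} {I : Ideal R} {φ : G →ₗ[R] F}
    (hφ : φ ∈ I • (⊤ : Submodule R (G →ₗ[R] F))) (e : Abelian.Ext X G n) :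
    e.comp (Ext.mk₀ (ModuleCat.ofHom φ)) (add_zero n) ∈
      I • (⊤ : Submodule R (Abelian.Ext X F n)) := by
  refine Submodule.smul_induction_on hφ (fun r hr φ _ ↦ ?_) fun φ ψ hφ hψ ↦ ?_
  · change e.comp (Ext.mk₀ (r • ModuleCat.ofHom φ)) _ ∈ _
    rw [Ext.mk₀_smul, Ext.comp_smul]
    exact Submodule.smul_mem_smul hr Submodule.mem_top
  · rw [ModuleCat.ofHom_add, Ext.mk₀_add, Ext.comp_add]
    exact Submodule.add_mem _ hφ hψ

lemma smul_top_ext_quotient_eq_bot (I : Ideal R) (Y : ModuleCat.{u} R) (n : ℕ) :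
    I • (⊤ : Submodule R (Abelian.Ext (ModuleCat.of R (R ⧸ I)) Y n)) = ⊥ := by
  refine le_bot_iff.1 (Submodule.smul_le.2 fun r hr e _ ↦ (Submodule.mem_bot R).2 ?_)
  have hzero : r • 𝟙 (ModuleCat.of R (R ⧸ I)) = 0 := by
    refine ModuleCat.hom_ext (LinearMap.ext fun x ↦ ?_)
    obtain ⟨s, rfl⟩ := Ideal.Quotient.mk_surjective x
    exact Ideal.Quotient.eq_zero_iff_mem.2 (I.mul_mem_right s hr)
  rw [← e.mk₀_id_comp, ← Ext.smul_comp, ← Ext.mk₀_smul, hzero, Ext.mk₀_zero, Ext.zero_comp]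

lemma hasProjectiveDimensionLE_ker {F K : Type u} [AddCommGroup F] [Module R F]
    [Module.Projective R F] [AddCommGroup K] [Module R K] {f : F →ₗ[R] K}
    (hf : Function.Surjective f) {n : ℕ}
    (hK : HasProjectiveDimensionLE (ModuleCat.of R K) (n + 1)) :
    HasProjectiveDimensionLE (ModuleCat.of R (LinearMap.ker f)) n :=
  ((IsShortExact.ker_subtype hf).shortExact_s5.hasProjectiveDimensionLT_X₃_iff n
    ((IsProjective.iff_projective F).1 inferInstance)).1 hK

lemma exists_retraction_self_of_free (G : Type u) [AddCommGroup G]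
    [Module R G] [Module.Free R G] [Nontrivial G] :
    ∃ (ι : R →ₗ[R] G) (π : G →ₗ[R] R), π ∘ₗ ι = LinearMap.id := by
  let b := Module.Free.chooseBasis R G
  obtain ⟨k⟩ := b.index_nonempty
  exact ⟨LinearMap.toSpanSingleton R G (b k), b.coord k, by ext; simp⟩

variable {A B C X : Type u} [AddCommGroup A] [Module R A] [AddCommGroup B] [Module R B]
  [AddCommGroup C] [Module R C] [AddCommGroup X] [Module R X]

lemma IsShortExact.extVanish_quotient_of_mem_smul_top {f : A →ₗ[R] B} {g : B →ₗ[R] C}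
    {I : Ideal R} (h : IsShortExact R f g) (hf : f ∈ I • (⊤ : Submodule R (A →ₗ[R] B)))
    {n : ℕ} (hC : ∀ i < n, ExtVanish R (R ⧸ I) C i) : ExtVanish R (R ⧸ I) A n := by
  refine extVanish_iff_forall_ext_eq_zero.2 fun e ↦ ?_
  have he := (Submodule.mem_bot R).1
    (smul_top_ext_quotient_eq_bot I (ModuleCat.of R B) n ▸ ext_comp_mk₀_mem_smul_top hf e)
  cases n with
  | zero =>
    have := (ModuleCat.mono_iff_injective (ModuleCat.ofHom f)).2 h.1
    exact Ext.postcomp_mk₀_injective_of_mono _ (ModuleCat.ofHom f)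
      (he.trans (map_zero _).symm)
  | succ n =>
    obtain ⟨x, rfl⟩ := Ext.covariant_sequence_exact₁ _ h.shortExact_s5 e he rfl
    rw [extVanish_iff_forall_ext_eq_zero.1 (hC n n.lt_succ_self) x, Ext.zero_comp]

variable [IsLocalRing R]

lemma natCast_le_depth_ker {m : ℕ} {K : Type u} [AddCommGroup K] [Module R K]
    {f : (Fin m → R) →ₗ[R] K} (hf : Function.Surjective f) {t : ℕ}
    (hR : t ≤ depth R (ModuleCat.of R R)) (hK : t ≤ depth R (ModuleCat.of R K) + 1) :
    t ≤ depth R (ModuleCat.of R (LinearMap.ker f)) :=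
  (IsShortExact.ker_subtype hf).le_depth₁
    (natCast_le_depth_iff.2 fun i hi ↦ (natCast_le_depth_iff.1 hR i hi).pi_right) hK

lemma exists_surjective_ker_le_smul_top (K : Type u) [AddCommGroup K] [Module R K]
    [Module.Finite R K] : ∃ (m : ℕ) (f : (Fin m → R) →ₗ[R] K), Function.Surjective f ∧
      LinearMap.ker f ≤ maximalIdeal R • ⊤ := by
  let b := Module.finBasis (ResidueField R) (TensorProduct R (ResidueField R) K)
  obtain ⟨v, hv⟩ := (TensorProduct.mk_surjective R K (ResidueField R)
    Ideal.Quotient.mk_surjective).comp_left b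
  refine ⟨_, Fintype.linearCombination R v, ?_, fun c hc ↦ ?_⟩
  · rw [← LinearMap.range_eq_top, Fintype.range_linearCombination]
    exact span_eq_top_of_tmul_eq_basis v b (congrFun hv)
  · have hsum : ∑ i, residue R (c i) • b i = 0 := by
      have := congrArg (TensorProduct.mk R (ResidueField R) K 1) (LinearMap.mem_ker.1 hc)
      simpa [Fintype.linearCombination_apply, ← hv, ← ResidueField.algebraMap_eq] using this
    rw [pi_eq_sum_univ' c]
    refine Submodule.sum_mem _ fun i _ ↦ Submodule.smul_mem_smul ?_ Submodule.mem_top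
    exact (residue_eq_zero_iff _).1 (Fintype.linearIndependent_iff.1 b.linearIndependent _ hsum i)

variable [IsNoetherianRing R]

lemma IsShortExact.extVanish_of_mem_smul_top {f : A →ₗ[R] B} {g : B →ₗ[R] C}
    [Module.Finite R B] [Module.Finite R X] (h : IsShortExact R f g)
    (hf : f ∈ maximalIdeal R • (⊤ : Submodule R (A →ₗ[R] B))) {n : ℕ}
    (hC : ExtVanish R X C n) : ExtVanish R X B n := by
  refine extVanish_of_top_le_smul fun e _ ↦ ?_
  obtain ⟨e, rfl⟩ := Ext.covariant_sequence_exact₂ _ h.shortExact_s5 e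
    (extVanish_iff_forall_ext_eq_zero.1 hC _)
  exact ext_comp_mk₀_mem_smul_top hf e

lemma projective_of_hasProjectiveDimensionLE {t : ℕ} (ht : depth R (ModuleCat.of R R) = t) {n : ℕ}
    {K : Type u} [AddCommGroup K] [Module R K] [Module.Finite R K]
    (hpd : HasProjectiveDimensionLE (ModuleCat.of R K) n) (hK : t ≤ depth R (ModuleCat.of R K)) :
    Module.Projective R K := by
  induction n generalizing K with
  | zero =>
    exact (IsProjective.iff_projective K).2 (projective_iff_hasProjectiveDimensionLT_one.2 hpd)
  | succ n ih =>
    obtain ⟨m, f, hf, hmin⟩ := exists_surjective_ker_le_smul_top (R := R) K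
    have hs := IsShortExact.ker_subtype hf
    have := ih (hasProjectiveDimensionLE_ker hf hpd)
      (natCast_le_depth_ker hf ht.ge (hK.trans le_self_add))
    have : Module.Free R (LinearMap.ker f) := Module.free_of_flat_of_isLocalRing
    have hj := linearMap_mem_smul_top_of_range_le ((Submodule.range_subtype _).trans_le hmin)
    -- With `G = ker f`: the map `Ext^t(k, G) → Ext^t(k, R^m)` is zero by minimality and
    -- injective since `depth K ≥ t`, whereas `Ext^t(k, G) ≠ 0` for free `G ≠ 0`.
    have hG := hs.extVanish_quotient_of_mem_smul_top hj (natCast_le_depth_iff.1 hK)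
    have hker : Subsingleton (LinearMap.ker f) := by
      by_contra hG'
      rw [not_subsingleton_iff_nontrivial] at hG'
      obtain ⟨ι, π, hπ⟩ := exists_retraction_self_of_free (R := R) (LinearMap.ker f)
      exact not_extVanish_of_depth_eq ht (hG.of_comp_eq_id_right hπ)
    have hinj : Function.Injective f :=
      LinearMap.ker_eq_bot.1 (Submodule.subsingleton_iff_eq_bot.1 hker)
    exact .of_equiv (LinearEquiv.ofBijective f ⟨hinj, hf⟩)

lemma extVanish_self_of_hasProjectiveDimensionLE {t : ℕ} (ht : depth R (ModuleCat.of R R) = t)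
    (ht₁ : t ≤ 1) {d : ℕ} {M : Type u} [AddCommGroup M] [Module R M] [Module.Finite R M]
    [Nontrivial M] (hpd : HasProjectiveDimensionLE (ModuleCat.of R M) d) [Module.Finite R X] {n : ℕ}
    (hM : ExtVanish R X M n) : ExtVanish R X R n := by
  obtain ⟨m, f, hf, hmin⟩ := exists_surjective_ker_le_smul_top (R := R) M
  have hs := IsShortExact.ker_subtype hf
  have hpd' : HasProjectiveDimensionLE (ModuleCat.of R (LinearMap.ker f)) d :=
    hasProjectiveDimensionLE_ker hf (hasProjectiveDimensionLT_of_ge _ (d + 1) (d + 2) (by omega))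
  have := projective_of_hasProjectiveDimensionLE ht hpd'
    (natCast_le_depth_ker hf ht.ge ((Nat.cast_le_one.2 ht₁).trans le_add_self))
  have : Module.Free R (LinearMap.ker f) := Module.free_of_flat_of_isLocalRing
  have hj := linearMap_mem_smul_top_of_range_le ((Submodule.range_subtype _).trans_le hmin)
  have : Nontrivial (Fin m → R) := hf.nontrivial
  obtain ⟨ι, π, hπ⟩ := exists_retraction_self_of_free (R := R) (Fin m → R)
  exact (hs.extVanish_of_mem_smul_top hj hM).of_comp_eq_id_right hπ

end ProjectiveDimension

theorem stmt5_general (R : Type u) [CommRing R] [IsNoetherianRing R] [IsLocalRing R]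
    (hd : depth R (ModuleCat.of R R) ≤ 1)
    (M : Type u) [AddCommGroup M] [Module R M] [Module.Finite R M] [Nontrivial M]
    (hinj : ∃ n : ℕ, InjdimLE R n (ModuleCat.of R M))
    (hr : rGdim R (ModuleCat.of R M) ≠ ⊤) :
    IsGorensteinRing R := by
  obtain ⟨t, ht⟩ := ENat.ne_top_iff_exists.1 (ne_top_of_le_ne_top ENat.one_ne_top hd)
  have ht₁ : t ≤ 1 := by exact_mod_cast ht.trans_le hd
  have hM (N : Type u) [AddCommGroup N] [Module R N] [Module.Finite R N] (i : ℕ) (hi : 1 < i) :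
      ExtVanish R N M i := extVanish_of_depth_lt ht.symm hinj (ht₁.trans_lt hi) N
  obtain ⟨_, ⟨r, -, hseq⟩, -⟩ := sInf_lt_iff.1 hr.lt_top
  obtain ⟨L, ι, π, ⟨m, hL⟩, hπι⟩ := hseq.exists_retraction hM
  have hpd := hL.hasProjectiveDimensionLE_of_retract
    (fun X _ _ hX ↦ hX.extVanish_one fun Y _ _ _ ↦ hM Y 2 one_lt_two) hπι
  exact ⟨1, injdimLE_of_forall_extVanish fun N _ _ _ ↦
    extVanish_self_of_hasProjectiveDimensionLE ht.symm ht₁ hpd (hM N 2 one_lt_two)⟩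

theorem stmt5 (R : Type u) [CommRing R] [IsNoetherianRing R] [IsLocalRing R]
    (hd : ringKrullDim R = 1)
    (M : Type u) [AddCommGroup M] [Module R M] [Module.Finite R M] [Nontrivial M]
    (hinj : ∃ n : ℕ, InjdimLE R n (ModuleCat.of R M))
    (hr : rGdim R (ModuleCat.of R M) ≠ ⊤) :
    IsGorensteinRing R :=
  stmt5_general R (WithBot.coe_le_coe.1 ((depth_le_ringKrullDim R).trans hd.le)) M hinj hr
end
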